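/- arXiv:1304.7023 — 5 statements merged into one kernel-verified Lean document; each statement's English description precedes it below -/
import Mathlib

section
/- Let $n \ge 1$, let $\rho : \mathbb{R}^n \to \mathbb{R}$ be twice continuously differentiable, and let $E : \mathbb{R}^n \times \mathbb{R}^n \to \mathbb{R}^n$ be continuous with $E(z, cv) = c^2 E(z, v)$ for all $c > 0$. Let $p \in \mathbb{R}^n$ and suppose that for every $v \neq 0$ with $\langle \nabla\rho(p), v \rangle = 0$ one has $D^2\rho(p)(v,v) + \langle E(p, v), \nabla\rho(p) \rangle < 0$. For $\epsilon > 0$ define $\tilde x_\epsilon(z) = -\rho(z) - \epsilon |z - p|^2$. Then there exist $\epsilon_0 > 0$, $C_0 > 0$, and an open neighborhood $U_0$ of $p$ such that for every $\epsilon \in (0, \epsilon_0)$, every $z \in U_0$, and every $v \neq 0$ with $\langle \nabla\tilde x_\epsilon(z), v \rangle = 0$, one has $D^2\tilde x_\epsilon(z)(v,v) + \langle E(z, v), \nabla\tilde x_\epsilon(z) \rangle \ge (C_0/2)\,|v|^2$. -/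
open MeasureTheory Set
open scoped RealInnerProductSpace


section helpers
variable {V : Type*} [NormedAddCommGroup V] [InnerProductSpace ℝ V] [CompleteSpace V]

theorem hasDerivAt_line_aux (z v : V) (t : ℝ) : HasDerivAt (fun t : ℝ => z + t • v) v t := by
  simpa using ((hasDerivAt_id t).smul_const v).const_add z

theorem second_aux (ρ : V → ℝ) (hρ : ContDiff ℝ 2 ρ) (ε : ℝ) (p z v : V) :
    iteratedDeriv 2 (fun t : ℝ => -ρ (z + t • v) - ε * ‖z + t • v - p‖ ^ 2) 0
      = -(fderiv ℝ (fderiv ℝ ρ) z v v) - 2 * ε * ‖v‖ ^ 2 := by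
  have h1 : ∀ t : ℝ, HasDerivAt (fun t : ℝ => -ρ (z + t • v) - ε * ‖z + t • v - p‖ ^ 2)
      (-(fderiv ℝ ρ (z + t • v) v) - ε * (2 * ⟪z + t • v - p, v⟫)) t := by
    intro t
    have hl := hasDerivAt_line_aux z v t
    have hd : DifferentiableAt ℝ ρ (z + t • v) := hρ.differentiable (by norm_num) _
    have a := hd.hasFDerivAt.comp_hasDerivAt t hl
    have b := (hl.sub_const p).norm_sq
    exact a.neg.sub (b.const_mul ε)
  have h2 : HasDerivAt (fun t : ℝ => -(fderiv ℝ ρ (z + t • v) v) - ε * (2 * ⟪z + t • v - p, v⟫))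
      (-(fderiv ℝ (fderiv ℝ ρ) z v v) - ε * (2 * ⟪v, v⟫)) 0 := by
    have hl := hasDerivAt_line_aux z v 0
    have hd : DifferentiableAt ℝ (fderiv ℝ ρ) (z + (0:ℝ) • v) :=
      (hρ.fderiv_right (m := 1) (by norm_num)).differentiable (by norm_num) _
    have a0 : HasDerivAt (fun t : ℝ => fderiv ℝ ρ (z + t • v))
        (fderiv ℝ (fderiv ℝ ρ) (z + (0:ℝ) • v) v) 0 :=
      hd.hasFDerivAt.comp_hasDerivAt (0:ℝ) hl
    have a : HasDerivAt (fun t : ℝ => fderiv ℝ ρ (z + t • v) v)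
        (fderiv ℝ (fderiv ℝ ρ) (z + (0:ℝ) • v) v v) 0 :=
      (ContinuousLinearMap.apply ℝ ℝ v).hasFDerivAt.comp_hasDerivAt (0:ℝ) a0
    have b := (hl.sub_const p).inner ℝ (hasDerivAt_const (0:ℝ) v)
    have c := a.neg.sub ((b.const_mul 2).const_mul ε)
    rw [zero_smul, add_zero, inner_zero_right, zero_add] at c
    exact c
  rw [iteratedDeriv_succ, iteratedDeriv_one, funext fun t => (h1 t).deriv, h2.deriv,
    real_inner_self_eq_norm_sq]
  ring

theorem grad_aux (ρ : V → ℝ) (hρ : ContDiff ℝ 2 ρ) (ε : ℝ) (p z : V) :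
    gradient (fun w => -ρ w - ε * ‖w - p‖ ^ 2) z = -gradient ρ z - (2 * ε) • (z - p) := by
  have hd : DifferentiableAt ℝ ρ z := hρ.differentiable (by norm_num) _
  apply HasGradientAt.gradient
  rw [hasGradientAt_iff_hasFDerivAt]
  have a := hd.hasFDerivAt
  have b := ((hasFDerivAt_id z).sub_const p).norm_sq
  refine (a.neg.sub (b.const_mul ε)).congr_fderiv ?_
  ext w
  simp [gradient, inner_sub_left, inner_smul_left]
  ring

end helpers

/-- Construction of the function `x̃_ε(z) = -ρ(z) - ε|z-p|²` whose level sets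
are uniformly strictly concave (from the side of the super-level sets) with respect to the
flow defined by `E`, near a point `p` of strict `E`-convexity of `{ρ = 0}`. -/
theorem stmt1 (n : ℕ) (hn : 1 ≤ n)
    (ρ : EuclideanSpace ℝ (Fin n) → ℝ) (hρ : ContDiff ℝ 2 ρ)
    (E : EuclideanSpace ℝ (Fin n) → EuclideanSpace ℝ (Fin n) → EuclideanSpace ℝ (Fin n))
    (hEcont : Continuous fun p : EuclideanSpace ℝ (Fin n) × EuclideanSpace ℝ (Fin n) => E p.1 p.2)
    (hEhom : ∀ (z v : EuclideanSpace ℝ (Fin n)) (c : ℝ), 0 < c → E z (c • v) = c ^ 2 • E z v)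
    (p : EuclideanSpace ℝ (Fin n))
    (hp : ∀ v : EuclideanSpace ℝ (Fin n), v ≠ 0 → ⟪gradient ρ p, v⟫ = 0 →
      iteratedDeriv 2 (fun t : ℝ => ρ (p + t • v)) 0 + ⟪E p v, gradient ρ p⟫ < 0) :
    ∃ (ε₀ C₀ : ℝ) (U₀ : Set (EuclideanSpace ℝ (Fin n))),
      0 < ε₀ ∧ 0 < C₀ ∧ IsOpen U₀ ∧ p ∈ U₀ ∧
      ∀ ε ∈ Set.Ioo (0 : ℝ) ε₀, ∀ z ∈ U₀, ∀ v : EuclideanSpace ℝ (Fin n), v ≠ 0 →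
        ⟪gradient (fun w => -ρ w - ε * ‖w - p‖ ^ 2) z, v⟫ = 0 →
        (C₀ / 2) * ‖v‖ ^ 2 ≤
          iteratedDeriv 2 (fun t : ℝ => -ρ (z + t • v) - ε * ‖z + t • v - p‖ ^ 2) 0
            + ⟪E z v, gradient (fun w => -ρ w - ε * ‖w - p‖ ^ 2) z⟫ := by
  classical
  have hg : Continuous (gradient ρ) := by
    unfold gradient
    exact (LinearIsometryEquiv.continuous _).comp (hρ.continuous_fderiv (by norm_num))
  have hH : Continuous (fderiv ℝ (fderiv ℝ ρ)) :=
    (hρ.fderiv_right (m := 1) (by norm_num)).continuous_fderiv (by norm_num)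
  let V := EuclideanSpace ℝ (Fin n)
  let N : ℝ × V → V := fun q => -gradient ρ q.2 - (2 * q.1) • (q.2 - p)
  let F : (ℝ × V) × V → ℝ := fun q =>
    -(fderiv ℝ (fderiv ℝ ρ) q.1.2 q.2 q.2) - 2 * q.1.1 * ‖q.2‖ ^ 2 + ⟪E q.1.2 q.2, N q.1⟫
  let M : (ℝ × V) × V → ℝ := fun q => max (F q) |⟪N q.1, q.2⟫|
  have hN : Continuous N := by fun_prop
  have hE' : Continuous fun q : (ℝ × V) × V => E q.1.2 q.2 :=
    hEcont.comp (continuous_fst.snd.prodMk continuous_snd)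
  have hF : Continuous F := by fun_prop
  have hM : Continuous M := by fun_prop
  have hS : IsCompact (Metric.sphere (0 : V) 1) := isCompact_sphere _ _
  have hSne : (Metric.sphere (0 : V) 1).Nonempty := by
    refine ⟨EuclideanSpace.single ⟨0, hn⟩ 1, mem_sphere_zero_iff_norm.2 ?_⟩
    exact (EuclideanSpace.norm_single _ _).trans norm_one
  have hpos : ∀ u ∈ Metric.sphere (0 : V) 1, 0 < M ((0, p), u) := by
    intro u hu
    have hu0 : u ≠ 0 := by
      rintro rfl
      simp at hu
    by_cases h : ⟪gradient ρ p, u⟫ = 0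
    · have h1 := hp u hu0 h
      have h3 : iteratedDeriv 2 (fun t : ℝ => ρ (p + t • u)) 0
          = fderiv ℝ (fderiv ℝ ρ) p u u := by
        have h4 := second_aux (fun w => -ρ w) hρ.neg 0 p p u
        have h5 : fderiv ℝ (fun w => -ρ w) = -fderiv ℝ ρ := by
          ext1 w
          simp [fderiv_fun_neg]
        rw [h5, fderiv_neg] at h4
        simpa using h4
      rw [h3] at h1
      refine lt_max_of_lt_left ?_
      have h6 : F ((0, p), u) = -(fderiv ℝ (fderiv ℝ ρ) p u u + ⟪E p u, gradient ρ p⟫) := by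
        simp only [F, N, mul_zero, zero_mul, zero_smul, sub_zero, inner_neg_right]
        ring
      rw [h6]
      linarith
    · refine lt_max_of_lt_right ?_
      simp only [N]
      simpa using h
  obtain ⟨u₀, hu₀, hmin⟩ := hS.exists_isMinOn hSne
    (f := fun u => M ((0, p), u)) (by fun_prop)
  set m := M ((0, p), u₀) with hm
  have hm0 : 0 < m := hpos u₀ hu₀
  have hev : ∀ᶠ q in nhds ((0 : ℝ), p), ∀ u ∈ Metric.sphere (0 : V) 1, m / 2 < M (q, u) := by
    apply hS.eventually_forall_of_forall_eventually
    intro u hu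
    have h1 : m ≤ M ((0, p), u) := hmin hu
    have h2 : m / 2 < M ((0, p), u) := by linarith
    exact hM.continuousAt.eventually (lt_mem_nhds h2)
  rw [nhds_prod_eq, Filter.eventually_prod_iff] at hev
  obtain ⟨pa, hpa, pb, hpb, hab⟩ := hev
  obtain ⟨ε₀, hε₀, hball⟩ := Metric.eventually_nhds_iff.1 hpa
  obtain ⟨U, hU, hUo, hpU⟩ := eventually_nhds_iff.1 hpb
  refine ⟨ε₀, m, U, hε₀, hm0, hUo, hpU, ?_⟩
  intro ε hε z hz v hv hgv
  rw [second_aux ρ hρ, grad_aux ρ hρ]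
  rw [grad_aux ρ hρ] at hgv
  have hv0 : 0 < ‖v‖ := norm_pos_iff.2 hv
  set u : V := ‖v‖⁻¹ • v with hu
  have hus : u ∈ Metric.sphere (0 : V) 1 := by
    simp [hu, norm_smul, hv0.ne']
  have hvu : v = ‖v‖ • u := by
    rw [hu, smul_smul, mul_inv_cancel₀ hv0.ne', one_smul]
  have hun : ‖u‖ = 1 := by simpa using hus
  have key := hab (x := ε) (hball (by simpa [abs_of_pos hε.1] using hε.2)) (hU z hz) u hus
  have hG : ⟪N (ε, z), u⟫ = 0 := by
    simp only [N, hu, inner_smul_right]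
    rw [hgv, mul_zero]
  have hFk : m / 2 < F ((ε, z), u) := by
    rcases lt_max_iff.1 key with h | h
    · exact h
    · exfalso
      rw [show ⟪N ((ε, z), u).1, ((ε, z), u).2⟫ = 0 from hG, abs_zero] at h
      linarith
  have hscale : -(fderiv ℝ (fderiv ℝ ρ) z v v) - 2 * ε * ‖v‖ ^ 2
      + ⟪E z v, -gradient ρ z - (2 * ε) • (z - p)⟫ = F ((ε, z), u) * ‖v‖ ^ 2 := by
    have e1 : E z v = ‖v‖ ^ 2 • E z u := by
      rw [← hEhom z u _ hv0, ← hvu]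
    have e2 : fderiv ℝ (fderiv ℝ ρ) z v v = ‖v‖ ^ 2 * fderiv ℝ (fderiv ℝ ρ) z u u := by
      conv_lhs => rw [hvu]
      simp only [map_smul, ContinuousLinearMap.smul_apply, smul_eq_mul]
      ring
    rw [e1, e2, real_inner_smul_left]
    simp only [F, N, hun]
    ring
  rw [hscale]
  exact mul_le_mul_of_nonneg_right hFk.le (by positivity)
end

section
/- Let $C > 0$, $x_0 > 0$, $\delta_0 > 0$, and let $u : (-\delta_0, \delta_0) \to \mathbb{R}$ be twice continuously differentiable with $u''(t) \ge C$ for all $t \in (-\delta_0, \delta_0)$. Suppose $u(0) = x \ge 0$ and $u'(0) = \lambda$ with $\lambda^2 \le 2Cx$. Then for every $t \in (-\delta_0, \delta_0)$ with $|t| \ge \frac{|\lambda|}{C} + \sqrt{\frac{2 x_0}{C}}$, one has $u(t) \ge x_0$. -/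
open Set

theorem taylor_aux (C T : ℝ) (hT : 0 < T) (u u' u'' : ℝ → ℝ)
    (hu : ∀ t ∈ Set.Icc 0 T, HasDerivAt u (u' t) t)
    (hu' : ∀ t ∈ Set.Icc 0 T, HasDerivAt u' (u'' t) t)
    (hb : ∀ t ∈ Set.Icc 0 T, C ≤ u'' t) :
    u 0 + u' 0 * T + C * T ^ 2 / 2 ≤ u T := by
  have hg : ∀ t ∈ Set.Icc 0 T, HasDerivAt (fun s => u s - u' 0 * s - C * s ^ 2 / 2)
      (u' t - u' 0 - C * t) t := by
    intro t ht
    have h1 := (hasDerivAt_id t).const_mul (u' 0)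
    have h2 := (((hasDerivAt_id t).pow 2).const_mul C).div_const 2
    refine (((hu t ht).sub h1).sub h2).congr_deriv ?_
    simp
    ring
  obtain ⟨c, hc, hce⟩ := exists_hasDerivAt_eq_slope _ _ hT
    (fun t ht => (hg t ht).continuousAt.continuousWithinAt)
    (fun t ht => hg t (Ioo_subset_Icc_self ht))
  have hcT : ∀ t ∈ Set.Icc 0 c, t ∈ Set.Icc 0 T := fun t ht => ⟨ht.1, ht.2.trans hc.2.le⟩
  obtain ⟨d, hd, hde⟩ := exists_hasDerivAt_eq_slope u' u'' hc.1
    (fun t ht => (hu' t (hcT t ht)).continuousAt.continuousWithinAt)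
    (fun t ht => hu' t (hcT t (Ioo_subset_Icc_self ht)))
  have hdb := hb d (hcT d (Ioo_subset_Icc_self hd))
  have hc0 := hc.1
  rw [hde, sub_zero, le_div_iff₀ hc0] at hdb
  rw [sub_zero, eq_div_iff hT.ne'] at hce
  have : 0 ≤ (u' c - u' 0 - C * c) * T := mul_nonneg (by linarith) hT.le
  simp only [mul_zero] at hce
  norm_num at hce
  linarith

/-- Escape estimate: if `u'' ≥ C > 0` on `(-δ₀, δ₀)`, `u(0) = x ≥ 0` and
`u'(0)² ≤ 2Cx`, then `u(t) ≥ x₀` as soon as `|t| ≥ |u'(0)|/C + √(2x₀/C)`. -/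
theorem stmt6 (C x₀ δ₀ : ℝ) (hC : 0 < C) (hx₀ : 0 < x₀) (hδ₀ : 0 < δ₀)
    (u u' u'' : ℝ → ℝ)
    (hu : ∀ t ∈ Set.Ioo (-δ₀) δ₀, HasDerivAt u (u' t) t)
    (hu' : ∀ t ∈ Set.Ioo (-δ₀) δ₀, HasDerivAt u' (u'' t) t)
    (hu''cont : ContinuousOn u'' (Set.Ioo (-δ₀) δ₀))
    (hbound : ∀ t ∈ Set.Ioo (-δ₀) δ₀, C ≤ u'' t)
    (hx : 0 ≤ u 0) (hlam : (u' 0) ^ 2 ≤ 2 * C * u 0) :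
    ∀ t ∈ Set.Ioo (-δ₀) δ₀, |u' 0| / C + Real.sqrt (2 * x₀ / C) ≤ |t| → x₀ ≤ u t := by
  intro t ht hle
  have key : u 0 + u' 0 * t + C * t ^ 2 / 2 ≤ u t := by
    rcases lt_trichotomy t 0 with h | h | h
    · have hm : ∀ s ∈ Set.Icc 0 (-t), -s ∈ Set.Ioo (-δ₀) δ₀ := fun s hs =>
        ⟨by linarith [hs.2, ht.1], by linarith [hs.1]⟩
      have := taylor_aux C (-t) (by linarith) (fun s => u (-s)) (fun s => -u' (-s))
        (fun s => u'' (-s))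
        (fun s hs => by
          have := (hu _ (hm s hs)).comp s (hasDerivAt_neg s)
          exact this.congr_deriv (by ring))
        (fun s hs => by
          have := ((hu' _ (hm s hs)).comp s (hasDerivAt_neg s)).neg
          exact this.congr_deriv (by ring))
        (fun s hs => hbound _ (hm s hs))
      simp only [neg_zero, neg_neg] at this
      linarith [neg_sq t, this]
    · subst h
      simp
    · have hm : ∀ s ∈ Set.Icc 0 t, s ∈ Set.Ioo (-δ₀) δ₀ := fun s hs =>
        ⟨by linarith [hs.1], by linarith [hs.2, ht.2]⟩
      exact taylor_aux C t h u u' u'' (fun s hs => hu s (hm s hs))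
        (fun s hs => hu' s (hm s hs)) (fun s hs => hbound s (hm s hs))
  have h1 : Real.sqrt (2 * x₀ / C) ≤ |t + u' 0 / C| := by
    have h2 := abs_sub_abs_le_abs_sub t (-(u' 0 / C))
    rw [abs_neg, abs_div, abs_of_pos hC, sub_neg_eq_add] at h2
    linarith
  have h3 : 2 * x₀ / C ≤ (t + u' 0 / C) ^ 2 := by
    rw [← sq_abs]
    exact (Real.sqrt_le_left (abs_nonneg _)).1 h1
  have h4 : 2 * x₀ * C ≤ (C * t + u' 0) ^ 2 := by
    have h5 := mul_le_mul_of_nonneg_right h3 (sq_nonneg C)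
    have e1 : 2 * x₀ / C * C ^ 2 = 2 * x₀ * C := by field_simp
    have e2 : (t + u' 0 / C) ^ 2 * C ^ 2 = (C * t + u' 0) ^ 2 := by field_simp
    rwa [e1, e2] at h5
  have h6 : x₀ * C ≤ (u 0 + u' 0 * t + C * t ^ 2 / 2) * C := by nlinarith
  exact (le_of_mul_le_mul_right h6 hC).trans key
end

section
/- Let $n \ge 3$, let $\sigma$ denote the surface measure on the unit sphere $\mathbb{S}^{n-2} \subset \mathbb{R}^{n-1}$, normalized so that $\int_{\mathbb{R}^{n-1}} f(Y)\, dY = \int_0^\infty \int_{\mathbb{S}^{n-2}} f(r\omega)\, r^{n-2}\, d\sigma(\omega)\, dr$, and let $\alpha : \mathbb{S}^{n-2} \to \mathbb{R}$ be continuous with $\alpha(\omega) > 0$ for all $\omega$. Then for every $b > 0$ and $\eta \in \mathbb{R}^{n-1}$, writing $\hat Y = Y/|Y|$, $\int_{\mathbb{R}^{n-1}} e^{-i \eta \cdot Y}\, |Y|^{2-n} \Big( \sqrt{\alpha(\hat Y)}\, e^{-b\,\alpha(\hat Y)\,|Y|^2} + \sqrt{\alpha(-\hat Y)}\, e^{-b\,\alpha(-\hat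 Y)\,|Y|^2} \Big) dY \;=\; \sqrt{\frac{\pi}{b}} \int_{\mathbb{S}^{n-2}} \exp\!\left(-\frac{(\eta\cdot\omega)^2}{4\, b\, \alpha(\omega)}\right) d\sigma(\omega).$ -/
open MeasureTheory Set
open scoped RealInnerProductSpace

section helpers

open scoped Pointwise

variable {E : Type*} [NormedAddCommGroup E] [InnerProductSpace ℝ E] [FiniteDimensional ℝ E]
  [MeasurableSpace E] [BorelSpace E] [Nontrivial E]

/-- Integration against `volumeIoiPow`. -/
lemma aux_integral_volumeIoiPow (m : ℕ) (g : ℝ → ℂ) :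
    ∫ r : Ioi (0 : ℝ), g r ∂(Measure.volumeIoiPow m) = ∫ r in Ioi (0 : ℝ), r ^ m • g r := by
  simp only [Measure.volumeIoiPow, ENNReal.ofReal]
  rw [integral_withDensity_eq_integral_smul,
    integral_subtype_comap measurableSet_Ioi fun a ↦ Real.toNNReal (a ^ m) • g a,
    setIntegral_congr_fun measurableSet_Ioi fun x hx ↦ ?_]
  · rw [NNReal.smul_def, Real.coe_toNNReal _ (pow_nonneg hx.out.le _)]
  · exact (measurable_subtype_coe.pow_const _).real_toNNReal

/-- Polar coordinates. -/
lemma aux_polar (m : ℕ) (hm : Module.finrank ℝ E = m + 1) (f : E → ℂ) (hf : Integrable f) :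
    Integrable (fun ω : Metric.sphere (0 : E) 1 => ∫ r in Ioi (0 : ℝ), r ^ m • f (r • (ω : E)))
      (volume : Measure E).toSphere ∧
    ∫ Y, f Y = ∫ ω : Metric.sphere (0 : E) 1, (∫ r in Ioi (0 : ℝ), r ^ m • f (r • (ω : E)))
      ∂(volume : Measure E).toSphere := by
  have mp := (volume : Measure E).measurePreserving_homeomorphUnitSphereProd
  have hm' : Module.finrank ℝ E - 1 = m := by omega
  rw [hm'] at mp
  set F : Metric.sphere (0 : E) 1 × Ioi (0 : ℝ) → ℂ := fun p => f ((p.2 : ℝ) • (p.1 : E)) with hF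
  have key : F ∘ (homeomorphUnitSphereProd E) = f ∘ Subtype.val := by
    funext x
    have hx : (x : E) ≠ 0 := x.2
    simp [hF, smul_smul, hx]
  have hemb := (homeomorphUnitSphereProd E).measurableEmbedding
  have hint : Integrable F ((volume : Measure E).toSphere.prod (.volumeIoiPow m)) := by
    rw [← mp.integrable_comp_emb hemb, key,
      ← integrableOn_iff_comap_subtypeVal (measurableSet_singleton _).compl]
    exact hf.integrableOn
  have heq : ∫ Y, f Y = ∫ p, F p ∂((volume : Measure E).toSphere.prod (.volumeIoiPow m)) := by
    rw [← mp.integral_comp hemb F]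
    have : ∀ x, F (homeomorphUnitSphereProd E x) = f x := fun x => congrFun key x
    simp_rw [this]
    rw [integral_subtype_comap (measurableSet_singleton _).compl f, restrict_compl_singleton]
  have h1 := hint.integral_prod_left
  rw [integral_prod _ hint] at heq
  have h2 : ∀ ω : Metric.sphere (0 : E) 1, ∫ r, F (ω, r) ∂(Measure.volumeIoiPow m)
      = ∫ r in Ioi (0 : ℝ), r ^ m • f (r • (ω : E)) := fun ω =>
    aux_integral_volumeIoiPow m (fun r => f (r • (ω : E)))
  simp_rw [h2] at h1 heq
  exact ⟨h1, heq⟩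

/-- The polar coordinates identity determines the measure. -/
lemma aux_unique (m : ℕ) (hm : Module.finrank ℝ E = m + 1)
    (σ : Measure (Metric.sphere (0 : E) 1))
    (hσ : ∀ f : E → ℝ, Integrable f →
      ∫ Y, f Y = ∫ r in Set.Ioi (0 : ℝ),
        (∫ ω : Metric.sphere (0 : E) 1, f (r • (ω : E)) ∂σ) * r ^ m) :
    σ = (volume : Measure E).toSphere := by
  have hreal : ∀ s : Set (Metric.sphere (0 : E) 1), MeasurableSet s →
      σ.real s = (volume : Measure E).toSphere.real s := by
    intro s hs
    set T : Set E := {Y | Y ≠ 0 ∧ ‖Y‖ < 1 ∧ ‖Y‖⁻¹ • Y ∈ (Subtype.val '' s : Set E)} with hT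
    have hTeq : T = Ioo (0 : ℝ) 1 • (Subtype.val '' s : Set E) := by
      ext Y
      simp only [hT, mem_ofPred_eq, mem_smul]
      constructor
      · rintro ⟨h0, h1, h2⟩
        refine ⟨‖Y‖, ⟨norm_pos_iff.2 h0, h1⟩, _, h2, ?_⟩
        rw [smul_smul, mul_inv_cancel₀ (norm_ne_zero_iff.2 h0), one_smul]
      · rintro ⟨r, ⟨hr0, hr1⟩, _, ⟨ω, hω, rfl⟩, rfl⟩
        have hn : ‖r • (ω : E)‖ = r := by rw [norm_smul]; simp [abs_of_pos hr0]
        refine ⟨?_, ?_, ?_⟩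
        · rw [← norm_ne_zero_iff, hn]; exact hr0.ne'
        · rw [hn]; exact hr1
        · rw [hn, smul_smul, inv_mul_cancel₀ hr0.ne', one_smul]; exact ⟨ω, hω, rfl⟩
    have hsm : MeasurableSet (Subtype.val '' s : Set E) :=
      (MeasurableEmbedding.subtype_coe Metric.isClosed_sphere.measurableSet).measurableSet_image.2 hs
    have hTm : MeasurableSet T := by
      refine (measurableSet_singleton (0 : E)).compl.inter
        ((measurableSet_lt measurable_norm measurable_const).inter ?_)
      exact (measurable_norm.inv.smul measurable_id) hsm
    have hTf : (volume : Measure E) T < ⊤ := by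
      refine (measure_mono (t := Metric.ball 0 1) ?_).trans_lt measure_ball_lt_top
      intro Y hY
      simpa using hY.2.1
    have h := hσ (T.indicator fun _ => 1) ((integrable_indicator_iff hTm).2
      (integrableOn_const hTf.ne))
    rw [integral_indicator_const _ hTm] at h
    have hr : ∀ r ∈ Ioi (0 : ℝ),
        (∫ ω : Metric.sphere (0 : E) 1, T.indicator (fun _ => (1 : ℝ)) (r • (ω : E)) ∂σ) * r ^ m
        = (Ioo (0 : ℝ) 1).indicator (fun r => σ.real s * r ^ m) r := by
      intro r hr
      have hr0 : 0 < r := hr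
      have hmem : ∀ ω : Metric.sphere (0 : E) 1, r • (ω : E) ∈ T ↔ r < 1 ∧ ω ∈ s := by
        intro ω
        have hn : ‖r • (ω : E)‖ = r := by rw [norm_smul]; simp [abs_of_pos hr0]
        have h0 : r • (ω : E) ≠ 0 := by rw [← norm_ne_zero_iff, hn]; exact hr0.ne'
        simp only [hT, mem_ofPred_eq, hn, smul_smul, inv_mul_cancel₀ hr0.ne', one_smul]
        constructor
        · rintro ⟨_, h1, ω', h2, h3⟩
          exact ⟨h1, Subtype.ext h3 ▸ h2⟩
        · rintro ⟨h1, h2⟩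
          exact ⟨h0, h1, ω, h2, rfl⟩
      by_cases h1 : r < 1
      · rw [indicator_of_mem (show r ∈ Ioo (0 : ℝ) 1 from ⟨hr0, h1⟩)]
        congr 1
        have : (fun ω : Metric.sphere (0 : E) 1 => T.indicator (fun _ => (1 : ℝ)) (r • (ω : E)))
            = s.indicator fun _ => 1 := by
          funext ω
          by_cases hω : ω ∈ s
          · rw [indicator_of_mem hω, indicator_of_mem ((hmem ω).2 ⟨h1, hω⟩)]
          · rw [indicator_of_notMem hω, indicator_of_notMem (fun h => hω ((hmem ω).1 h).2)]
        rw [this, integral_indicator_const _ hs]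
        simp
      · rw [indicator_of_notMem (fun h => h1 h.2)]
        have : ∀ ω : Metric.sphere (0 : E) 1,
            T.indicator (fun _ => (1 : ℝ)) (r • (ω : E)) = 0 := fun ω =>
          indicator_of_notMem (fun h => h1 ((hmem ω).1 h).1) _
        simp [this]
    rw [setIntegral_congr_fun measurableSet_Ioi hr, setIntegral_indicator measurableSet_Ioo,
      inter_eq_right.2 Ioo_subset_Ioi_self, integral_const_mul, ← integral_Ioc_eq_integral_Ioo,
      ← intervalIntegral.integral_of_le zero_le_one, integral_pow] at h
    rw [measureReal_def (μ := (volume : Measure E).toSphere),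
      Measure.toSphere_apply' _ hs, ← hTeq, hm, ENNReal.toReal_mul, ← measureReal_def]
    simp at h
    rw [h]
    have : (m : ℝ) + 1 ≠ 0 := by positivity
    rw [ENNReal.toReal_natCast]
    push_cast
    field_simp
  have hfin : σ univ ≠ ⊤ := by
    intro htop
    have h := hreal univ MeasurableSet.univ
    rw [measureReal_def, htop] at h
    simp only [ENNReal.toReal_top] at h
    have := (measureReal_eq_zero_iff (measure_ne_top _ _)).1 h.symm
    exact Measure.toSphere_ne_zero (volume : Measure E) (Measure.measure_univ_eq_zero.1 this)
  have : IsFiniteMeasure σ := ⟨hfin.lt_top⟩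
  ext s hs
  exact (measureReal_eq_measureReal_iff).1 (hreal s hs)

/-- One half of the integrand. -/
noncomputable def auxG (m : ℕ) (α : E → ℝ) (b : ℝ) (η Y : E) : ℂ :=
  Complex.exp (-(Complex.I * (⟪η, Y⟫ : ℝ))) * ((‖Y‖ ^ (-(m : ℝ)) *
    (Real.sqrt (α (‖Y‖⁻¹ • Y)) * Real.exp (-(b * α (‖Y‖⁻¹ • Y) * ‖Y‖ ^ 2))) : ℝ))

lemma auxG_integrable (m : ℕ) (hm : Module.finrank ℝ E = m + 1) (α : E → ℝ)
    (hαcont : ContinuousOn α (Metric.sphere (0 : E) 1))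
    (hαpos : ∀ ω ∈ Metric.sphere (0 : E) 1, 0 < α ω) (b : ℝ) (hb : 0 < b) (η : E) :
    Integrable (auxG m α b η) := by
  have hcomp : IsCompact (Metric.sphere (0 : E) 1) := isCompact_sphere 0 1
  have hne : (Metric.sphere (0 : E) 1).Nonempty := NormedSpace.sphere_nonempty.2 zero_le_one
  obtain ⟨x, hx, hxmin⟩ := hcomp.exists_isMinOn hne hαcont
  obtain ⟨y, hy, hymax⟩ := hcomp.exists_isMaxOn hne hαcont
  have hc := hαpos x hx
  have hmaps : ∀ Y : E, Y ≠ 0 → ‖Y‖⁻¹ • Y ∈ Metric.sphere (0 : E) 1 := by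
    intro Y hY
    simp [norm_smul, hY]
  have hdom : Integrable (fun Y : E =>
      (fun r : ℝ => r ^ (-(m : ℝ)) * (Real.sqrt (α y) * Real.exp (-(b * α x) * r ^ 2))) ‖Y‖) := by
    refine (integrable_fun_norm_addHaar volume (f := fun r : ℝ => r ^ (-(m : ℝ)) *
      (Real.sqrt (α y) * Real.exp (-(b * α x) * r ^ 2)))).2 ?_
    have : IntegrableOn (fun r : ℝ => Real.sqrt (α y) * Real.exp (-(b * α x) * r ^ 2)) (Ioi 0) :=
      ((integrable_exp_neg_mul_sq (mul_pos hb hc)).const_mul _).integrableOn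
    refine this.congr_fun (fun r hr => ?_) measurableSet_Ioi
    have hr0 : (0 : ℝ) < r := hr
    simp only [hm, Nat.add_sub_cancel, smul_eq_mul]
    rw [Real.rpow_neg hr0.le, Real.rpow_natCast, ← mul_assoc, mul_inv_cancel₀ (by positivity), one_mul]
  refine hdom.mono' ?_ ?_
  · rw [← restrict_compl_singleton (μ := (volume : Measure E)) 0]
    refine ContinuousOn.aestronglyMeasurable ?_ (measurableSet_singleton _).compl
    have hn : ContinuousOn (fun Y : E => ‖Y‖) {0}ᶜ := continuous_norm.continuousOn
    have hα : ContinuousOn (fun Y : E => α (‖Y‖⁻¹ • Y)) {0}ᶜ :=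
      hαcont.comp ((hn.inv₀ fun Y hY => norm_ne_zero_iff.2 hY).smul continuousOn_id)
        fun Y hY => hmaps Y hY
    have hp : ContinuousOn (fun Y : E => ‖Y‖ ^ (-(m : ℝ))) {0}ᶜ :=
      hn.rpow_const fun Y hY => Or.inl (norm_ne_zero_iff.2 hY)
    unfold auxG
    refine ContinuousOn.mul (by fun_prop) (Complex.continuous_ofReal.comp_continuousOn ?_)
    exact hp.mul (hα.sqrt.mul (((continuousOn_const.mul hα).mul (hn.pow 2)).neg.rexp))
  · have h0 : ∀ᵐ Y : E, Y ≠ 0 := by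
      simp [ae_iff]
    filter_upwards [h0] with Y hY
    unfold auxG
    have h1 : ‖Complex.exp (-(Complex.I * (⟪η, Y⟫ : ℝ)))‖ = 1 := by
      rw [Complex.norm_exp]; simp
    have hmin := hxmin (hmaps Y hY)
    have hmax := hymax (hmaps Y hY)
    simp only [mem_ofPred_eq] at hmin hmax
    rw [norm_mul, h1, one_mul, Complex.norm_real, Real.norm_of_nonneg (by positivity)]
    gcongr
    nlinarith [mul_le_mul_of_nonneg_left hmin hb.le, sq_nonneg ‖Y‖,
      mul_le_mul_of_nonneg_right (mul_le_mul_of_nonneg_left hmin hb.le) (sq_nonneg ‖Y‖)]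

/-- The half-line integral. -/
noncomputable def auxA (a b s : ℝ) : ℂ :=
  ∫ r in Ioi (0 : ℝ), Complex.exp (-(Complex.I * ((r * s : ℝ) : ℂ))) *
    ((Real.sqrt a * Real.exp (-(b * a * r ^ 2)) : ℝ) : ℂ)

lemma auxG_polar (m : ℕ) (hm : Module.finrank ℝ E = m + 1) (α : E → ℝ)
    (hαcont : ContinuousOn α (Metric.sphere (0 : E) 1))
    (hαpos : ∀ ω ∈ Metric.sphere (0 : E) 1, 0 < α ω) (b : ℝ) (hb : 0 < b) (η : E) :
    Integrable (fun ω : Metric.sphere (0 : E) 1 => auxA (α ω) b ⟪η, (ω : E)⟫)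
      (volume : Measure E).toSphere ∧
    ∫ Y, auxG m α b η Y = ∫ ω : Metric.sphere (0 : E) 1, auxA (α ω) b ⟪η, (ω : E)⟫
      ∂(volume : Measure E).toSphere := by
  have h := aux_polar m hm _ (auxG_integrable m hm α hαcont hαpos b hb η)
  have h2 : ∀ ω : Metric.sphere (0 : E) 1,
      ∫ r in Ioi (0 : ℝ), r ^ m • auxG m α b η (r • (ω : E)) = auxA (α ω) b ⟪η, (ω : E)⟫ := by
    intro ω
    unfold auxA
    refine setIntegral_congr_fun measurableSet_Ioi fun r hr => ?_
    have hr0 : (0 : ℝ) < r := hr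
    have hn : ‖r • (ω : E)‖ = r := by rw [norm_smul]; simp [abs_of_pos hr0]
    simp only [auxG, hn, smul_smul, inv_mul_cancel₀ hr0.ne', one_smul, inner_smul_right]
    rw [Real.rpow_neg hr0.le, Real.rpow_natCast, Complex.real_smul, mul_left_comm,
      ← Complex.ofReal_mul, ← mul_assoc (r ^ m), mul_inv_cancel₀ (by positivity), one_mul]
  simp_rw [h2] at h
  exact h

lemma auxA_add (a b s : ℝ) (ha : 0 < a) (hb : 0 < b) :
    auxA a b s + auxA a b (-s)
      = ((Real.sqrt (Real.pi / b) * Real.exp (-(s ^ 2 / (4 * b * a))) : ℝ) : ℂ) := by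
  have hba : 0 < b * a := mul_pos hb ha
  set f : ℝ → ℂ := fun r => Complex.exp (-(Complex.I * ((r * s : ℝ) : ℂ))) *
    ((Real.sqrt a * Real.exp (-(b * a * r ^ 2)) : ℝ) : ℂ) with hf
  have hfe : ∀ r : ℝ, f r = (Real.sqrt a : ℂ) *
      (Complex.exp (Complex.I * (-s : ℂ) * r) * Complex.exp (-((b * a : ℝ) : ℂ) * r ^ 2)) := by
    intro r
    simp only [hf]
    push_cast
    rw [mul_left_comm]
    congr 3 <;> ring
  have hfi : Integrable f := by
    have := (integrable_cexp_quadratic (b := ((b * a : ℝ) : ℂ)) (by simpa using hba)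
      (Complex.I * (-s : ℂ)) 0).const_mul (Real.sqrt a : ℂ)
    refine this.congr (.of_forall fun r => ?_)
    simp only [hfe r]
    rw [← Complex.exp_add]
    congr 2
    ring
  have h2 : auxA a b (-s) = ∫ r in Iic (0 : ℝ), f r := by
    have := integral_comp_neg_Ioi 0 f
    rw [neg_zero] at this
    rw [← this]
    unfold auxA
    simp only [hf]
    congr 1
    funext r
    congr 3
    · simp
    · ring_nf
  have h1 : auxA a b s = ∫ r in Ioi (0 : ℝ), f r := rfl
  rw [h1, h2, add_comm, intervalIntegral.integral_Iic_add_Ioi hfi.integrableOn hfi.integrableOn]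
  simp_rw [hfe]
  rw [integral_const_mul, fourierIntegral_gaussian (by simpa using hba)]
  have h3 : ((Real.pi : ℂ) / ((b * a : ℝ) : ℂ)) ^ (1 / 2 : ℂ)
      = ((Real.sqrt (Real.pi / (b * a)) : ℝ) : ℂ) := by
    rw [Real.sqrt_eq_rpow, Complex.ofReal_cpow (by positivity)]
    push_cast
    rfl
  have h4 : Real.sqrt (Real.pi / b) = Real.sqrt a * Real.sqrt (Real.pi / (b * a)) := by
    rw [← Real.sqrt_mul ha.le]
    congr 1
    field_simp
  rw [h3, h4]
  push_cast
  rw [mul_assoc]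
  congr 3
  ring

lemma aux_main (m : ℕ) (hm : Module.finrank ℝ E = m + 1) (α : E → ℝ)
    (hαcont : ContinuousOn α (Metric.sphere (0 : E) 1))
    (hαpos : ∀ ω ∈ Metric.sphere (0 : E) 1, 0 < α ω) (b : ℝ) (hb : 0 < b) (η : E) :
    ∫ Y, (auxG m α b η Y + auxG m α b (-η) (-Y)) =
      ((Real.sqrt (Real.pi / b) * ∫ ω : Metric.sphere (0 : E) 1,
        Real.exp (-((⟪η, (ω : E)⟫ : ℝ) ^ 2 / (4 * b * α (ω : E))))
        ∂(volume : Measure E).toSphere : ℝ) : ℂ) := by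
  have i1 := auxG_integrable m hm α hαcont hαpos b hb η
  have i2 := auxG_integrable m hm α hαcont hαpos b hb (-η)
  obtain ⟨j1, e1⟩ := auxG_polar m hm α hαcont hαpos b hb η
  obtain ⟨j2, e2⟩ := auxG_polar m hm α hαcont hαpos b hb (-η)
  rw [integral_add i1 i2.comp_neg, integral_neg_eq_self (auxG m α b (-η)) volume, e1, e2,
    ← integral_add j1 j2, ← integral_const_mul, ← integral_complex_ofReal]
  congr 1
  funext ω
  rw [inner_neg_left]
  exact auxA_add _ _ _ (hαpos _ ω.2) hb

end helpers

/-- Fourier transform in `Y` of the symmetrized Gaussian boundary kernel with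
direction-dependent (not necessarily quadratic-form) convexity function `α`, computed by polar
coordinates: it equals `√(π/b) ∫_{S^{n-2}} exp(-(η·ω)²/(4bα(ω))) dσ(ω)`. -/
theorem stmt11 (n : ℕ) (hn : 3 ≤ n)
    (σ : Measure ↥(Metric.sphere (0 : EuclideanSpace ℝ (Fin (n - 1))) 1))
    (hσ : ∀ f : EuclideanSpace ℝ (Fin (n - 1)) → ℝ, Integrable f →
      ∫ Y, f Y = ∫ r in Set.Ioi (0 : ℝ),
        (∫ ω : ↥(Metric.sphere (0 : EuclideanSpace ℝ (Fin (n - 1))) 1),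
          f (r • (ω : EuclideanSpace ℝ (Fin (n - 1)))) ∂σ) * r ^ (n - 2))
    (α : EuclideanSpace ℝ (Fin (n - 1)) → ℝ)
    (hαcont : ContinuousOn α (Metric.sphere (0 : EuclideanSpace ℝ (Fin (n - 1))) 1))
    (hαpos : ∀ ω ∈ Metric.sphere (0 : EuclideanSpace ℝ (Fin (n - 1))) 1, 0 < α ω)
    (b : ℝ) (hb : 0 < b) (η : EuclideanSpace ℝ (Fin (n - 1))) :
    ∫ Y : EuclideanSpace ℝ (Fin (n - 1)),
        Complex.exp (-(Complex.I * (⟪η, Y⟫ : ℝ))) * ((‖Y‖ ^ ((2 : ℝ) - n) *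
          (Real.sqrt (α (‖Y‖⁻¹ • Y)) * Real.exp (-(b * α (‖Y‖⁻¹ • Y) * ‖Y‖ ^ 2))
            + Real.sqrt (α (-(‖Y‖⁻¹ • Y))) * Real.exp (-(b * α (-(‖Y‖⁻¹ • Y)) * ‖Y‖ ^ 2))) : ℝ))
      = ((Real.sqrt (Real.pi / b) *
          ∫ ω : ↥(Metric.sphere (0 : EuclideanSpace ℝ (Fin (n - 1))) 1),
            Real.exp (-((⟪η, (ω : EuclideanSpace ℝ (Fin (n - 1)))⟫ : ℝ) ^ 2 /
              (4 * b * α (ω : EuclideanSpace ℝ (Fin (n - 1)))))) ∂σ : ℝ) : ℂ) := by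
  obtain ⟨m, rfl⟩ : ∃ m, n = m + 2 := ⟨n - 2, by omega⟩
  have hm : Module.finrank ℝ (EuclideanSpace ℝ (Fin (m + 2 - 1))) = m + 1 := by simp
  have : Nontrivial (EuclideanSpace ℝ (Fin (m + 2 - 1))) :=
    Module.nontrivial_of_finrank_pos (R := ℝ) (by omega)
  have hs := aux_unique m hm σ hσ
  subst hs
  rw [← aux_main m hm α hαcont hαpos b hb η]
  congr 1
  funext Y
  have he : (2 : ℝ) - ((m + 2 : ℕ) : ℝ) = -(m : ℝ) := by push_cast; ring
  simp only [auxG, he, norm_neg, smul_neg, inner_neg_neg]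
  rw [← mul_add, ← Complex.ofReal_add, ← mul_add]
end

section
/- Let $n \ge 3$, $F > 0$, let $\sigma$ denote the surface measure on $\mathbb{S}^{n-2} \subset \mathbb{R}^{n-1}$ normalized so that $\int_{\mathbb{R}^{n-1}} f(Y)\, dY = \int_0^\infty \int_{\mathbb{S}^{n-2}} f(r\omega)\, r^{n-2}\, d\sigma(\omega)\, dr$, and let $\alpha : \mathbb{S}^{n-2} \to \mathbb{R}$ be continuous with $\alpha(\omega) > 0$ for all $\omega$. Define, for $X \in \mathbb{R}$ and $Y \in \mathbb{R}^{n-1} \setminus \{0\}$ with $\hat Y = Y/|Y|$: $\tilde K(X, Y) = e^{-FX}\, |Y|^{1-n} \Big( \chi_{\alpha(\hat Y)}\big(\tfrac{X - \alpha(\hat Y)|Y|^2}{|Y|}\big) + \chi_{\alpha(-\hat Y)}\big(\tfrac{-X + \alpha(-\hat Y)|Y|^2}{|Y|}\big) \Big)$, where $\chi_a(s) = e^{-F s^2/(2a)}$. Then $\tilde K$ is integrable on $\mathbb{R} \times \mathbb{R}^{n-1}$, and for all $\xi \in \mathbb{R}$, $\eta \in \mathbb{R}^{n-1}$: $\int_{\mathbb{R}}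 \int_{\mathbb{R}^{n-1}} e^{-i(\xi X + \eta \cdot Y)}\, \tilde K(X, Y)\, dY\, dX \;=\; \frac{2\pi}{\sqrt{\xi^2 + F^2}} \int_{\mathbb{S}^{n-2}} \exp\!\left(-\frac{F\, (\eta\cdot\omega)^2}{2\,(\xi^2 + F^2)\,\alpha(\omega)}\right) d\sigma(\omega).$ -/
open MeasureTheory Set
open scoped RealInnerProductSpace


lemma gaussFT (c t : ℝ) (hc : 0 < c) :
    ∫ x : ℝ, Complex.exp (Complex.I * t * x) * ((Real.exp (-c * x ^ 2) : ℝ) : ℂ)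
      = ((Real.sqrt (Real.pi / c) * Real.exp (-(t ^ 2 / (4 * c))) : ℝ) : ℂ) := by
  have h := fourierIntegral_gaussian (b := (c : ℂ)) (by simpa using hc) (t : ℂ)
  push_cast
  rw [h]
  have h0 : 0 ≤ Real.pi / c := by positivity
  rw [Real.sqrt_eq_rpow, Complex.ofReal_cpow h0]
  push_cast
  congr 2
  ring

lemma gaussCos (c t : ℝ) (hc : 0 < c) :
    ∫ r in Ioi (0 : ℝ), 2 * Real.cos (r * t) * Real.exp (-c * r ^ 2)
      = Real.sqrt (Real.pi / c) * Real.exp (-(t ^ 2 / (4 * c))) := by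
  have hint : Integrable (fun x : ℝ => Complex.exp (Complex.I * t * x) *
      ((Real.exp (-c * x ^ 2) : ℝ) : ℂ)) := by
    apply Integrable.bdd_mul (c := 1) ((integrable_exp_neg_mul_sq hc).ofReal)
    · apply Continuous.aestronglyMeasurable; fun_prop
    · refine Filter.Eventually.of_forall fun x => ?_
      rw [Complex.norm_exp]; simp
  have h := congrArg Complex.re (gaussFT c t hc)
  rw [Complex.ofReal_re] at h
  rw [← h]
  have h3 := integral_re hint
  simp only [RCLike.re_to_complex] at h3
  rw [← h3]
  have h2 := integral_comp_abs (f := fun r => Real.cos (r * t) * Real.exp (-c * r ^ 2))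
  calc _ = 2 * ∫ r in Ioi (0 : ℝ), Real.cos (r * t) * Real.exp (-c * r ^ 2) := by
        rw [← integral_const_mul]; simp only [mul_assoc]
    _ = _ := by
        rw [← h2]
        apply integral_congr_ae
        refine Filter.Eventually.of_forall fun x => ?_
        simp only [Complex.re_mul_ofReal, sq_abs]
        congr 1
        rw [Complex.exp_re]
        have : Real.cos (|x| * t) = Real.cos (t * x) := by
          rcases abs_choice x with h | h <;> rw [h]
          · ring_nf
          · rw [← Real.cos_neg]; ring_nf
        simp [this]

lemma expo (F X a r : ℝ) (ha : 0 < a) (hr : 0 < r) :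
    Real.exp (-(F * X)) * Real.exp (-(F * ((X - a * r ^ 2) / r) ^ 2 / (2 * a)))
     = Real.exp (-(F / (2 * a * r ^ 2)) * X ^ 2) * Real.exp (-(F * a / 2) * r ^ 2) := by
  rw [← Real.exp_add, ← Real.exp_add]
  congr 1
  field_simp
  ring

lemma Xint (F ξ a r : ℝ) (hF : 0 < F) (ha : 0 < a) (hr : 0 < r) :
    ∫ X : ℝ, Complex.exp (-(Complex.I * (ξ * X))) *
      ((Real.exp (-(F / (2 * a * r ^ 2)) * X ^ 2) * Real.exp (-(F * a / 2) * r ^ 2) : ℝ) : ℂ)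
     = ((r * Real.sqrt (2 * Real.pi * a / F) *
        Real.exp (-(a * (ξ ^ 2 + F ^ 2) / (2 * F)) * r ^ 2) : ℝ) : ℂ) := by
  have h := gaussFT (F / (2 * a * r ^ 2)) (-ξ) (by positivity)
  have e : Real.sqrt (Real.pi / (F / (2 * a * r ^ 2))) = r * Real.sqrt (2 * Real.pi * a / F) := by
    rw [show Real.pi / (F / (2 * a * r ^ 2)) = r ^ 2 * (2 * Real.pi * a / F) by field_simp,
      Real.sqrt_mul (by positivity), Real.sqrt_sq hr.le]
  have e2 : Real.exp (-((-ξ) ^ 2 / (4 * (F / (2 * a * r ^ 2))))) * Real.exp (-(F * a / 2) * r ^ 2)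
      = Real.exp (-(a * (ξ ^ 2 + F ^ 2) / (2 * F)) * r ^ 2) := by
    rw [← Real.exp_add]
    congr 1
    field_simp
    ring
  rw [← e, ← e2, ← mul_assoc, Complex.ofReal_mul, ← h, ← integral_mul_const]
  congr 1
  ext X
  push_cast
  rw [← mul_assoc]
  congr 3
  ring

lemma radialInt (n : ℕ) (hn : 3 ≤ n) (c : ℝ) (hc : 0 < c) :
    Integrable (fun Y : EuclideanSpace ℝ (Fin (n - 1)) =>
      ‖Y‖ ^ ((1 : ℝ) - n) * (‖Y‖ * Real.exp (-c * ‖Y‖ ^ 2))) := by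
  have : Nonempty (Fin (n - 1)) := ⟨⟨0, by omega⟩⟩
  have : Nontrivial (EuclideanSpace ℝ (Fin (n - 1))) := inferInstance
  have h := (integrable_fun_norm_addHaar (volume : Measure (EuclideanSpace ℝ (Fin (n - 1))))
    (f := fun r : ℝ => r ^ ((1 : ℝ) - n) * (r * Real.exp (-c * r ^ 2)))).2
  apply h
  refine ((integrable_exp_neg_mul_sq hc).integrableOn (s := Ioi (0 : ℝ))).congr_fun ?_
    measurableSet_Ioi
  intro r hr
  have hr : 0 < r := hr
  simp only [finrank_euclideanSpace, Fintype.card_fin, smul_eq_mul]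
  have e : r ^ (n - 1 - 1) * r ^ ((1 : ℝ) - n) * r = 1 := by
    rw [← Real.rpow_natCast, ← Real.rpow_add hr, ← Real.rpow_add_one hr.ne']
    have : ((n - 1 - 1 : ℕ) : ℝ) = n - 2 := by
      rw [Nat.sub_sub, Nat.cast_sub (by omega)]; norm_num
    rw [this]
    ring_nf
    simp
  calc _ = (r ^ (n - 1 - 1) * r ^ ((1 : ℝ) - n) * r) * Real.exp (-c * r ^ 2) := by rw [e, one_mul]
    _ = _ := by ring

noncomputable def gk (n : ℕ) (F ξ : ℝ) (a : EuclideanSpace ℝ (Fin (n - 1)) → ℝ)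
    (Y : EuclideanSpace ℝ (Fin (n - 1))) : ℝ :=
  ‖Y‖ ^ ((1 : ℝ) - n) * (‖Y‖ * Real.sqrt (2 * Real.pi * a Y / F) *
        Real.exp (-(a Y * (ξ ^ 2 + F ^ 2) / (2 * F)) * ‖Y‖ ^ 2))

noncomputable def kk (n : ℕ) (F : ℝ) (a : EuclideanSpace ℝ (Fin (n - 1)) → ℝ)
    (X : ℝ) (Y : EuclideanSpace ℝ (Fin (n - 1))) : ℝ :=
  ‖Y‖ ^ ((1 : ℝ) - n) * (Real.exp (-(F / (2 * a Y * ‖Y‖ ^ 2)) * X ^ 2) *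
    Real.exp (-(F * a Y / 2) * ‖Y‖ ^ 2))

lemma gbound (F ξ a m M r : ℝ) (hF : 0 < F) (hm : 0 < m) (h1 : m ≤ a) (h2 : a ≤ M) :
    Real.sqrt (2 * Real.pi * a / F) * Real.exp (-(a * (ξ ^ 2 + F ^ 2) / (2 * F)) * r ^ 2)
     ≤ Real.sqrt (2 * Real.pi * M / F) * Real.exp (-(m * F / 2) * r ^ 2) := by
  have h3 : m * F / 2 ≤ a * (ξ ^ 2 + F ^ 2) / (2 * F) := by
    rw [div_le_div_iff₀ (by positivity) (by positivity)]
    have : m * F ^ 2 ≤ a * (ξ ^ 2 + F ^ 2) :=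
      mul_le_mul h1 (by nlinarith [sq_nonneg ξ]) (by positivity) (by linarith)
    nlinarith
  gcongr

lemma gkInt (n : ℕ) (hn : 3 ≤ n) (F ξ m M : ℝ) (hF : 0 < F)
    (a : EuclideanSpace ℝ (Fin (n - 1)) → ℝ) (ha : Measurable a) (hm : 0 < m)
    (h1 : ∀ Y, m ≤ a Y) (h2 : ∀ Y, a Y ≤ M) : Integrable (gk n F ξ a) := by
  refine ((radialInt n hn (m * F / 2) (by positivity)).const_mul
    (Real.sqrt (2 * Real.pi * M / F))).mono' ?_ ?_
  · apply Measurable.aestronglyMeasurable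
    unfold gk
    fun_prop
  · refine Filter.Eventually.of_forall fun Y => ?_
    have := gbound F ξ (a Y) m M ‖Y‖ hF hm (h1 Y) (h2 Y)
    have h0 : 0 ≤ ‖Y‖ ^ ((1 : ℝ) - n) := by positivity
    have h00 := norm_nonneg Y
    rw [Real.norm_of_nonneg (by unfold gk; positivity), gk]
    have := mul_le_mul_of_nonneg_left this (mul_nonneg h0 h00)
    linarith

lemma ae_ne (n : ℕ) (hn : 3 ≤ n) : ∀ᵐ Y : EuclideanSpace ℝ (Fin (n - 1)), Y ≠ 0 := by
  have : Nonempty (Fin (n - 1)) := ⟨⟨0, by omega⟩⟩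
  have : Nontrivial (EuclideanSpace ℝ (Fin (n - 1))) := inferInstance
  exact (measure_eq_zero_iff_ae_notMem (s := {(0 : EuclideanSpace ℝ (Fin (n - 1)))})).1 (by simp)

lemma kX (n : ℕ) (F ξ : ℝ) (hF : 0 < F)
    (a : EuclideanSpace ℝ (Fin (n - 1)) → ℝ) (Y : EuclideanSpace ℝ (Fin (n - 1)))
    (ha : 0 < a Y) (hY : Y ≠ 0) :
    ∫ X : ℝ, Complex.exp (-(Complex.I * (ξ * X))) * (kk n F a X Y : ℂ) = (gk n F ξ a Y : ℂ) := by
  have h := Xint F ξ (a Y) ‖Y‖ hF ha (norm_pos_iff.2 hY)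
  rw [gk, Complex.ofReal_mul, ← h, ← integral_const_mul]
  congr 1
  ext X
  rw [kk, Complex.ofReal_mul]
  ring

lemma kkInt (n : ℕ) (hn : 3 ≤ n) (F m M : ℝ) (hF : 0 < F)
    (a : EuclideanSpace ℝ (Fin (n - 1)) → ℝ) (ha : Measurable a) (hm : 0 < m)
    (h1 : ∀ Y, m ≤ a Y) (h2 : ∀ Y, a Y ≤ M) :
    Integrable (fun p : ℝ × EuclideanSpace ℝ (Fin (n - 1)) => kk n F a p.1 p.2) := by
  rw [Measure.volume_eq_prod, integrable_prod_iff']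
  · constructor
    · filter_upwards [ae_ne n hn] with Y hY
      have := norm_pos_iff.2 hY
      have := hm.trans_le (h1 Y)
      exact ((integrable_exp_neg_mul_sq (b := F / (2 * a Y * ‖Y‖ ^ 2))
        (by positivity)).mul_const _).const_mul _
    · refine (gkInt n hn F 0 m M hF a ha hm h1 h2).congr ?_
      filter_upwards [ae_ne n hn] with Y hY
      have h := kX n F 0 hF a Y (hm.trans_le (h1 Y)) hY
      simp only [Complex.ofReal_zero, zero_mul, mul_zero, neg_zero, Complex.exp_zero,
        one_mul] at h
      rw [integral_complex_ofReal] at h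
      rw [← Complex.ofReal_inj.1 h]
      congr 1
      ext X
      rw [Real.norm_of_nonneg]
      unfold kk; positivity
  · apply Measurable.aestronglyMeasurable
    unfold kk
    fun_prop

lemma cexp_int {Ω : Type*} [MeasurableSpace Ω] (μ : Measure Ω) (φ : Ω → ℝ) (hφ : Measurable φ)
    (f : Ω → ℝ) (hf : Integrable f μ) :
    Integrable (fun p => Complex.exp (-(Complex.I * (φ p : ℂ))) * (f p : ℂ)) μ := by
  apply Integrable.bdd_mul (c := 1) hf.ofReal
  · apply Measurable.aestronglyMeasurable; fun_prop
  · refine Filter.Eventually.of_forall fun x => ?_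
    rw [Complex.norm_exp]; simp

lemma Phi (n : ℕ) (hn : 3 ≤ n) (F m M : ℝ) (hF : 0 < F)
    (a : EuclideanSpace ℝ (Fin (n - 1)) → ℝ) (ha : Measurable a) (hm : 0 < m)
    (h1 : ∀ Y, m ≤ a Y) (h2 : ∀ Y, a Y ≤ M) (ξ : ℝ) (η : EuclideanSpace ℝ (Fin (n - 1))) :
    ∫ p : ℝ × EuclideanSpace ℝ (Fin (n - 1)),
      Complex.exp (-(Complex.I * ((ξ * p.1 + ⟪η, p.2⟫ : ℝ) : ℂ))) * (kk n F a p.1 p.2 : ℂ)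
     = ∫ Y, Complex.exp (-(Complex.I * ((⟪η, Y⟫ : ℝ) : ℂ))) * (gk n F ξ a Y : ℂ) := by
  have hk := kkInt n hn F m M hF a ha hm h1 h2
  have := cexp_int volume (fun p : ℝ × EuclideanSpace ℝ (Fin (n - 1)) => ξ * p.1 + ⟪η, p.2⟫)
    (by fun_prop) _ hk
  rw [Measure.volume_eq_prod] at this ⊢
  rw [integral_prod_symm _ this]
  apply integral_congr_ae
  filter_upwards [ae_ne n hn] with Y hY
  rw [← kX n F ξ hF a Y (hm.trans_le (h1 Y)) hY, ← integral_const_mul]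
  congr 1
  ext X
  rw [← mul_assoc, ← Complex.exp_add]
  push_cast
  congr 2
  ring

lemma PhiSum (n : ℕ) (hn : 3 ≤ n) (F m M : ℝ) (hF : 0 < F)
    (a : EuclideanSpace ℝ (Fin (n - 1)) → ℝ) (ha : Measurable a) (hm : 0 < m)
    (h1 : ∀ Y, m ≤ a Y) (h2 : ∀ Y, a Y ≤ M) :
    Integrable (fun p : ℝ × EuclideanSpace ℝ (Fin (n - 1)) =>
      kk n F a p.1 p.2 + kk n F a p.1 (-p.2)) ∧
    ∀ (ξ : ℝ) (η : EuclideanSpace ℝ (Fin (n - 1))),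
    ∫ p : ℝ × EuclideanSpace ℝ (Fin (n - 1)),
      Complex.exp (-(Complex.I * ((ξ * p.1 + ⟪η, p.2⟫ : ℝ) : ℂ))) *
        ((kk n F a p.1 p.2 + kk n F a p.1 (-p.2) : ℝ) : ℂ)
     = ((∫ Y, 2 * Real.cos ⟪η, Y⟫ * gk n F ξ a Y : ℝ) : ℂ) := by
  have hk := kkInt n hn F m M hF a ha hm h1 h2
  let e : (ℝ × EuclideanSpace ℝ (Fin (n - 1))) ≃ᵐ (ℝ × EuclideanSpace ℝ (Fin (n - 1))) :=
    (MeasurableEquiv.refl ℝ).prodCongr (MeasurableEquiv.neg _)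
  have he : MeasurePreserving e volume volume := by
    rw [Measure.volume_eq_prod]
    exact (MeasurePreserving.id (volume : Measure ℝ)).prod
      (Measure.measurePreserving_neg (volume : Measure (EuclideanSpace ℝ (Fin (n - 1)))))
  have hk' : Integrable (fun p : ℝ × EuclideanSpace ℝ (Fin (n - 1)) => kk n F a p.1 (-p.2)) :=
    (he.integrable_comp_emb e.measurableEmbedding).2 hk
  refine ⟨hk.add hk', fun ξ η => ?_⟩
  have A1 := cexp_int volume (fun p : ℝ × EuclideanSpace ℝ (Fin (n - 1)) => ξ * p.1 + ⟪η, p.2⟫)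
    (by fun_prop) _ hk
  have A2 := cexp_int volume (fun p : ℝ × EuclideanSpace ℝ (Fin (n - 1)) => ξ * p.1 + ⟪η, p.2⟫)
    (by fun_prop) _ hk'
  have P1 := Phi n hn F m M hF a ha hm h1 h2 ξ η
  have P2 := Phi n hn F m M hF a ha hm h1 h2 ξ (-η)
  rw [← he.integral_comp e.measurableEmbedding] at P2
  have P3 : ∀ p : ℝ × EuclideanSpace ℝ (Fin (n - 1)), e p = (p.1, -p.2) := fun p => rfl
  simp only [P3, inner_neg_neg] at P2
  have hg := gkInt n hn F ξ m M hF a ha hm h1 h2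
  have B1 := cexp_int volume (fun Y : EuclideanSpace ℝ (Fin (n - 1)) => ⟪η, Y⟫)
    (by fun_prop) _ hg
  have B2 := cexp_int volume (fun Y : EuclideanSpace ℝ (Fin (n - 1)) => ⟪-η, Y⟫)
    (by fun_prop) _ hg
  simp only [Complex.ofReal_add (kk n F a _ _), mul_add]
  rw [integral_add A1 A2, P1, P2, ← integral_add B1 B2, ← integral_complex_ofReal]
  congr 1
  ext Y
  rw [← add_mul, Complex.ofReal_mul, Complex.ofReal_mul, Complex.ofReal_cos, Complex.ofReal_ofNat,
    Complex.two_cos, inner_neg_left]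
  push_cast
  congr 1
  rw [add_comm]
  congr 2 <;> ring

lemma sigmaFin (n : ℕ) (hn : 3 ≤ n)
    (σ : Measure ↥(Metric.sphere (0 : EuclideanSpace ℝ (Fin (n - 1))) 1))
    (hσ : ∀ f : EuclideanSpace ℝ (Fin (n - 1)) → ℝ, Integrable f →
      ∫ Y, f Y = ∫ r in Set.Ioi (0 : ℝ),
        (∫ ω : ↥(Metric.sphere (0 : EuclideanSpace ℝ (Fin (n - 1))) 1),
          f (r • (ω : EuclideanSpace ℝ (Fin (n - 1)))) ∂σ) * r ^ (n - 2)) :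
    IsFiniteMeasure σ := by
  by_contra hfin
  have htop : σ univ = ⊤ := by
    by_contra h
    exact hfin ⟨lt_top_iff_ne_top.2 h⟩
  have hi := radialInt n hn 1 one_pos
  have h := hσ _ hi
  have hnorm : ∀ (r : ℝ) (ω : ↥(Metric.sphere (0 : EuclideanSpace ℝ (Fin (n - 1))) 1)),
      ‖r • (ω : EuclideanSpace ℝ (Fin (n - 1)))‖ = |r| := by
    intro r ω
    rw [norm_smul, norm_eq_of_mem_sphere, mul_one, Real.norm_eq_abs]
  simp only [hnorm, integral_const, Measure.real, htop, ENNReal.toReal_top, zero_smul, zero_mul,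
    smul_zero] at h
  rw [integral_eq_zero_iff_of_nonneg (fun Y => by positivity) hi] at h
  have : ∀ᵐ Y : EuclideanSpace ℝ (Fin (n - 1)), False := by
    filter_upwards [h, ae_ne n hn] with Y h1 h2
    have := norm_pos_iff.2 h2
    have h3 : 0 < ‖Y‖ ^ ((1 : ℝ) - n) * (‖Y‖ * Real.exp (-1 * ‖Y‖ ^ 2)) := by positivity
    exact h3.ne' h1
  simp at this
  exact NeZero.ne (volume : Measure (EuclideanSpace ℝ (Fin (n - 1)))) this

lemma sphereInt (n : ℕ) (hn : 3 ≤ n) (F m M : ℝ) (hF : 0 < F)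
    (σ : Measure ↥(Metric.sphere (0 : EuclideanSpace ℝ (Fin (n - 1))) 1))
    (hσ : ∀ f : EuclideanSpace ℝ (Fin (n - 1)) → ℝ, Integrable f →
      ∫ Y, f Y = ∫ r in Set.Ioi (0 : ℝ),
        (∫ ω : ↥(Metric.sphere (0 : EuclideanSpace ℝ (Fin (n - 1))) 1),
          f (r • (ω : EuclideanSpace ℝ (Fin (n - 1)))) ∂σ) * r ^ (n - 2))
    (b : EuclideanSpace ℝ (Fin (n - 1)) → ℝ) (hb : Measurable b) (hm : 0 < m)
    (h1 : ∀ Y, m ≤ b Y) (h2 : ∀ Y, b Y ≤ M) (ξ : ℝ) (η : EuclideanSpace ℝ (Fin (n - 1))) :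
    ∫ Y, 2 * Real.cos ⟪η, Y⟫ * gk n F ξ (fun Y => b (‖Y‖⁻¹ • Y)) Y
     = 2 * Real.pi / Real.sqrt (ξ ^ 2 + F ^ 2) *
            ∫ ω : ↥(Metric.sphere (0 : EuclideanSpace ℝ (Fin (n - 1))) 1),
              Real.exp (-(F * (⟪η, (ω : EuclideanSpace ℝ (Fin (n - 1)))⟫ : ℝ) ^ 2 /
                (2 * (ξ ^ 2 + F ^ 2) * b (ω : EuclideanSpace ℝ (Fin (n - 1)))))) ∂σ := by
  have := sigmaFin n hn σ hσ
  have hg := gkInt n hn F ξ m M hF (fun Y => b (‖Y‖⁻¹ • Y)) (by fun_prop) hm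
    (fun Y => h1 _) (fun Y => h2 _)
  have hi : Integrable (fun Y => 2 * Real.cos ⟪η, Y⟫ * gk n F ξ (fun Y => b (‖Y‖⁻¹ • Y)) Y) := by
    apply Integrable.bdd_mul (c := 2) hg
    · apply Continuous.aestronglyMeasurable; fun_prop
    · refine Filter.Eventually.of_forall fun x => ?_
      rw [norm_mul, Real.norm_eq_abs, Real.norm_eq_abs]
      have := Real.abs_cos_le_one ⟪η, x⟫
      norm_num; linarith
  rw [hσ _ hi]
  let G : ℝ → ↥(Metric.sphere (0 : EuclideanSpace ℝ (Fin (n - 1))) 1) → ℝ := fun r ω =>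
    Real.sqrt (2 * Real.pi * b ω / F) * (2 * Real.cos (r * ⟪η, (ω : EuclideanSpace ℝ (Fin (n - 1)))⟫)
      * Real.exp (-(b ω * (ξ ^ 2 + F ^ 2) / (2 * F)) * r ^ 2))
  have s1 : ∫ r in Set.Ioi (0 : ℝ),
        (∫ ω : ↥(Metric.sphere (0 : EuclideanSpace ℝ (Fin (n - 1))) 1),
          (2 * Real.cos ⟪η, r • (ω : EuclideanSpace ℝ (Fin (n - 1)))⟫ *
            gk n F ξ (fun Y => b (‖Y‖⁻¹ • Y)) (r • (ω : EuclideanSpace ℝ (Fin (n - 1))))) ∂σ)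
            * r ^ (n - 2) = ∫ r in Set.Ioi (0 : ℝ), ∫ ω, G r ω ∂σ := by
    refine setIntegral_congr_fun measurableSet_Ioi fun r hr => ?_
    have hr : 0 < r := hr
    rw [← integral_mul_const]
    congr 1
    ext ω
    have hn1 : ‖r • (ω : EuclideanSpace ℝ (Fin (n - 1)))‖ = r := by
      rw [norm_smul, norm_eq_of_mem_sphere, mul_one, Real.norm_of_nonneg hr.le]
    have e : r ^ (n - 2) * r ^ ((1 : ℝ) - n) * r = 1 := by
      rw [← Real.rpow_natCast, ← Real.rpow_add hr, ← Real.rpow_add_one hr.ne']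
      have : ((n - 2 : ℕ) : ℝ) = n - 2 := by
        rw [Nat.cast_sub (by omega)]; norm_num
      rw [this]
      ring_nf
      simp
    simp only [gk, hn1, smul_smul, inv_mul_cancel₀ hr.ne', one_smul, inner_smul_right, G]
    generalize Real.sqrt (2 * Real.pi * b ω / F) = A
    generalize Real.exp (-(b ω * (ξ ^ 2 + F ^ 2) / (2 * F)) * r ^ 2) = B
    generalize Real.cos (r * ⟪η, (ω : EuclideanSpace ℝ (Fin (n - 1)))⟫) = C
    linear_combination (2 * A * B * C) * e
  have hGi : Integrable (Function.uncurry G) ((volume.restrict (Ioi (0 : ℝ))).prod σ) := by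
    have hdom : Integrable (fun p : ℝ × ↥(Metric.sphere (0 : EuclideanSpace ℝ (Fin (n - 1))) 1) =>
        2 * Real.sqrt (2 * Real.pi * M / F) * Real.exp (-(m * F / 2) * p.1 ^ 2))
        ((volume.restrict (Ioi (0 : ℝ))).prod σ) :=
      (((integrable_exp_neg_mul_sq (b := m * F / 2) (by positivity)).restrict
        (s := Ioi (0 : ℝ))).const_mul _).comp_fst σ
    refine hdom.mono' ?_ ?_
    · apply Measurable.aestronglyMeasurable
      simp only [G, Function.uncurry_def]
      fun_prop
    · refine Filter.Eventually.of_forall fun p => ?_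
      obtain ⟨r, ω⟩ := p
      simp only [G, Function.uncurry_apply_pair]
      have h3 := gbound F ξ (b ω) m M r hF hm (h1 _) (h2 _)
      have h4 := Real.abs_cos_le_one (r * ⟪η, (ω : EuclideanSpace ℝ (Fin (n - 1)))⟫)
      rw [norm_mul, norm_mul, norm_mul, Real.norm_of_nonneg (Real.sqrt_nonneg _),
        Real.norm_of_nonneg (Real.exp_nonneg _), Real.norm_eq_abs, Real.norm_eq_abs, abs_two]
      have h5 : 0 ≤ Real.sqrt (2 * Real.pi * b ω / F) *
        Real.exp (-(b ω * (ξ ^ 2 + F ^ 2) / (2 * F)) * r ^ 2) := by positivity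
      nlinarith [mul_le_mul_of_nonneg_left h4 h5]
  rw [s1, integral_integral_swap hGi, ← integral_const_mul]
  congr 1
  ext ω
  have hbp := hm.trans_le (h1 ω)
  simp only [G]
  have hS : 0 < ξ ^ 2 + F ^ 2 := by positivity
  rw [integral_const_mul, gaussCos _ _ (by positivity), ← mul_assoc,
    ← Real.sqrt_mul (by positivity)]
  congr 1
  · rw [show 2 * Real.pi * b ω / F * (Real.pi / (b ω * (ξ ^ 2 + F ^ 2) / (2 * F)))
      = (2 * Real.pi) ^ 2 / (ξ ^ 2 + F ^ 2) by field_simp,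
      Real.sqrt_div (by positivity), Real.sqrt_sq (by positivity)]
  · congr 1
    field_simp
    norm_num

/-- The `(X,Y)`-Fourier transform of the boundary Schwartz kernel `K̃` of the
conjugated normal operator `A_F` with Gaussian cutoff `χ_a(s) = e^{-Fs²/(2a)}`:
`K̃` is integrable and its Fourier transform equals
`(2π/√(ξ²+F²)) ∫_{S^{n-2}} exp(-F(η·ω)²/(2(ξ²+F²)α(ω))) dσ(ω)`. -/
theorem stmt12 (n : ℕ) (hn : 3 ≤ n) (F : ℝ) (hF : 0 < F)
    (σ : Measure ↥(Metric.sphere (0 : EuclideanSpace ℝ (Fin (n - 1))) 1))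
    (hσ : ∀ f : EuclideanSpace ℝ (Fin (n - 1)) → ℝ, Integrable f →
      ∫ Y, f Y = ∫ r in Set.Ioi (0 : ℝ),
        (∫ ω : ↥(Metric.sphere (0 : EuclideanSpace ℝ (Fin (n - 1))) 1),
          f (r • (ω : EuclideanSpace ℝ (Fin (n - 1)))) ∂σ) * r ^ (n - 2))
    (α : EuclideanSpace ℝ (Fin (n - 1)) → ℝ)
    (hαcont : ContinuousOn α (Metric.sphere (0 : EuclideanSpace ℝ (Fin (n - 1))) 1))
    (hαpos : ∀ ω ∈ Metric.sphere (0 : EuclideanSpace ℝ (Fin (n - 1))) 1, 0 < α ω)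
    (K : ℝ → EuclideanSpace ℝ (Fin (n - 1)) → ℝ)
    (hK : ∀ (X : ℝ) (Y : EuclideanSpace ℝ (Fin (n - 1))),
      K X Y = Real.exp (-(F * X)) * ‖Y‖ ^ ((1 : ℝ) - n) *
        (Real.exp (-(F * ((X - α (‖Y‖⁻¹ • Y) * ‖Y‖ ^ 2) / ‖Y‖) ^ 2 / (2 * α (‖Y‖⁻¹ • Y))))
          + Real.exp (-(F * ((-X + α (-(‖Y‖⁻¹ • Y)) * ‖Y‖ ^ 2) / ‖Y‖) ^ 2 /
              (2 * α (-(‖Y‖⁻¹ • Y))))))) :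
    Integrable (fun p : ℝ × EuclideanSpace ℝ (Fin (n - 1)) => K p.1 p.2) ∧
    ∀ (ξ : ℝ) (η : EuclideanSpace ℝ (Fin (n - 1))),
      (∫ X : ℝ, ∫ Y : EuclideanSpace ℝ (Fin (n - 1)),
          Complex.exp (-(Complex.I * (ξ * X + (⟪η, Y⟫ : ℝ)))) * (K X Y : ℝ))
        = ((2 * Real.pi / Real.sqrt (ξ ^ 2 + F ^ 2) *
            ∫ ω : ↥(Metric.sphere (0 : EuclideanSpace ℝ (Fin (n - 1))) 1),
              Real.exp (-(F * (⟪η, (ω : EuclideanSpace ℝ (Fin (n - 1)))⟫ : ℝ) ^ 2 /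
                (2 * (ξ ^ 2 + F ^ 2) * α (ω : EuclideanSpace ℝ (Fin (n - 1)))))) ∂σ : ℝ) : ℂ) := by
  classical
  have hScomp : IsCompact (Metric.sphere (0 : EuclideanSpace ℝ (Fin (n - 1))) 1) := isCompact_sphere _ _
  have hSne : (Metric.sphere (0 : EuclideanSpace ℝ (Fin (n - 1))) 1).Nonempty := by
    have : Nonempty (Fin (n - 1)) := ⟨⟨0, by omega⟩⟩
    have : Nontrivial (EuclideanSpace ℝ (Fin (n - 1))) := inferInstance
    exact NormedSpace.sphere_nonempty.2 zero_le_one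
  obtain ⟨ωm, hωm, hmin⟩ := hScomp.exists_isMinOn hSne hαcont
  obtain ⟨ωM, hωM, hmax⟩ := hScomp.exists_isMaxOn hSne hαcont
  let b : EuclideanSpace ℝ (Fin (n - 1)) → ℝ := (Metric.sphere (0 : EuclideanSpace ℝ (Fin (n - 1))) 1).piecewise α (fun _ => α ωm)
  have hb : Measurable b := hαcont.measurable_piecewise continuousOn_const
    Metric.isClosed_sphere.measurableSet
  have hbS : ∀ Y ∈ (Metric.sphere (0 : EuclideanSpace ℝ (Fin (n - 1))) 1), b Y = α Y := by
    intro Y hY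
    exact Set.piecewise_eq_of_mem _ _ _ hY
  have h1 : ∀ Y, α ωm ≤ b Y := by
    intro Y
    by_cases hY : Y ∈ (Metric.sphere (0 : EuclideanSpace ℝ (Fin (n - 1))) 1)
    · rw [hbS Y hY]; exact hmin hY
    · exact (show b Y = α ωm from Set.piecewise_eq_of_notMem _ _ _ hY).ge
  have h2 : ∀ Y, b Y ≤ α ωM := by
    intro Y
    by_cases hY : Y ∈ (Metric.sphere (0 : EuclideanSpace ℝ (Fin (n - 1))) 1)
    · rw [hbS Y hY]; exact hmax hY
    · rw [show b Y = α ωm from Set.piecewise_eq_of_notMem _ _ _ hY]; exact hmax hωm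
  have hm := hαpos _ hωm
  let a : EuclideanSpace ℝ (Fin (n - 1)) → ℝ := fun Y => b (‖Y‖⁻¹ • Y)
  have ha : Measurable a := by fun_prop
  obtain ⟨I1, I2⟩ := PhiSum n hn F (α ωm) (α ωM) hF a ha hm (fun Y => h1 _) (fun Y => h2 _)
  have hKk : ∀ X Y, Y ≠ 0 → kk n F a X Y + kk n F a X (-Y) = K X Y := by
    intro X Y hY
    have hr := norm_pos_iff.2 hY
    have hu : ‖Y‖⁻¹ • Y ∈ (Metric.sphere (0 : EuclideanSpace ℝ (Fin (n - 1))) 1) := by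
      rw [mem_sphere_zero_iff_norm, norm_smul, norm_inv, norm_norm, inv_mul_cancel₀ hr.ne']
    have hu' : -(‖Y‖⁻¹ • Y) ∈ (Metric.sphere (0 : EuclideanSpace ℝ (Fin (n - 1))) 1) := by
      rw [mem_sphere_zero_iff_norm, norm_neg]; exact mem_sphere_zero_iff_norm.1 hu
    have e1 := expo F X (α (‖Y‖⁻¹ • Y)) ‖Y‖ (hαpos _ hu) hr
    have e2 := expo F X (α (-(‖Y‖⁻¹ • Y))) ‖Y‖ (hαpos _ hu') hr
    have a1 : a Y = α (‖Y‖⁻¹ • Y) := hbS _ hu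
    have a2 : a (-Y) = α (-(‖Y‖⁻¹ • Y)) := by
      simp only [a, norm_neg, smul_neg]; exact hbS _ hu'
    have e3 : ((-X + α (-(‖Y‖⁻¹ • Y)) * ‖Y‖ ^ 2) / ‖Y‖) ^ 2 =
      ((X - α (-(‖Y‖⁻¹ • Y)) * ‖Y‖ ^ 2) / ‖Y‖) ^ 2 := by ring
    rw [hK, kk, kk, a1, a2, norm_neg, ← e1, ← e2, e3]
    ring
  have hae : ∀ᵐ p : ℝ × EuclideanSpace ℝ (Fin (n - 1)), p.2 ≠ 0 := by
    rw [Measure.volume_eq_prod]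
    exact Measure.quasiMeasurePreserving_snd.ae (ae_ne n hn)
  have hKi : Integrable (fun p : ℝ × EuclideanSpace ℝ (Fin (n - 1)) => K p.1 p.2) := by
    refine I1.congr ?_
    filter_upwards [hae] with p hp
    exact hKk _ _ hp
  refine ⟨hKi, fun ξ η => ?_⟩
  have hc := cexp_int volume (fun p : ℝ × EuclideanSpace ℝ (Fin (n - 1)) => ξ * p.1 + ⟪η, p.2⟫)
    (by fun_prop) _ hKi
  have hfin := sphereInt n hn F (α ωm) (α ωM) hF σ hσ b hb hm h1 h2 ξ η
  have hbω : ∀ ω : (Metric.sphere (0 : EuclideanSpace ℝ (Fin (n - 1))) 1), b (ω : EuclideanSpace ℝ (Fin (n - 1))) = α ω := fun ω => hbS _ ω.2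
  simp only [hbω] at hfin
  rw [← hfin, ← I2 ξ η]
  have hp := integral_prod _ hc
  rw [← Measure.volume_eq_prod] at hp
  simp only [Complex.ofReal_add, Complex.ofReal_mul] at hp
  rw [← hp]
  apply integral_congr_ae
  filter_upwards [hae] with p hp
  rw [hKk _ _ hp]
  push_cast
  rfl
end

section
/- Let $n \ge 3$, $F > 0$, $c > 0$, let $\sigma$ denote the surface measure on $\mathbb{S}^{n-2} \subset \mathbb{R}^{n-1}$ (normalized so that $\int_{\mathbb{R}^{n-1}} f(Y)\, dY = \int_0^\infty \int_{\mathbb{S}^{n-2}} f(r\omega)\, r^{n-2}\, d\sigma(\omega)\, dr$), and let $\alpha : \mathbb{S}^{n-2} \to \mathbb{R}$ be continuous with $c_1 \le \alpha(\omega) \le c_2$ for some constants $c_2 \ge c_1 > 0$. Writing $\langle\xi\rangle = (\xi^2 + F^2)^{1/2}$, there exists $c' > 0$ such that for all $\xi \in \mathbb{R}$ and $\eta \in \mathbb{R}^{n-1}$, $\frac{1}{\langle\xi\rangle} \int_{\mathbb{S}^{n-2}} \exp\!\left(-\frac{(\eta\cdot\omega)^2}{4\, c\, \alpha(\omega)\,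 \langle\xi\rangle^2}\right) d\sigma(\omega) \;\ge\; \frac{c'}{\sqrt{1 + \xi^2 + |\eta|^2}}.$ -/
open MeasureTheory Set
open scoped RealInnerProductSpace

lemma slab_exists {E : Type*} [NormedAddCommGroup E] [InnerProductSpace ℝ E]
    [FiniteDimensional ℝ E] [MeasurableSpace E] [BorelSpace E]
    (hE : 2 ≤ Module.finrank ℝ E) (e : E) (he : ‖e‖ = 1) (δ : ℝ) (h0 : 0 < δ) (h1 : δ ≤ 1) :
    ∃ S : Set E, IsCompact S ∧
      volume.real S = δ * volume.real (Metric.closedBall (0 : E) (1/2)) ∧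
      ∀ Y ∈ S, 1 ≤ ‖Y‖ ∧ ‖Y‖ ≤ 2 ∧ |⟪e, Y⟫| ≤ δ := by
  have hee : ⟪e, e⟫ = 1 := by rw [real_inner_self_eq_norm_sq, he]; norm_num
  have hv : ∃ v : E, ‖v‖ = 3/2 ∧ ⟪e, v⟫ = 0 := by
    have he0 : e ≠ 0 := by
      rintro rfl
      simp at he
    obtain ⟨k, hk⟩ := Nat.exists_eq_add_of_le hE
    haveI : Fact (Module.finrank ℝ E = (k + 1) + 1) := ⟨by omega⟩
    have hfr := Submodule.finrank_orthogonal_span_singleton (𝕜 := ℝ) (n := k + 1) he0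
    haveI : Nontrivial ((ℝ ∙ e)ᗮ : Submodule ℝ E) :=
      Module.nontrivial_of_finrank_pos (R := ℝ) (by omega)
    obtain ⟨v, hv⟩ := exists_norm_eq ((ℝ ∙ e)ᗮ : Submodule ℝ E) (c := 3/2) (by norm_num)
    refine ⟨v, by simpa using hv, ?_⟩
    exact Submodule.mem_orthogonal_singleton_iff_inner_right.mp v.2
  obtain ⟨v, hv, hev⟩ := hv
  let T : E →ₗ[ℝ] E := LinearMap.transvection ((innerSL ℝ e : E →L[ℝ] ℝ) : E →ₗ[ℝ] ℝ) ((δ - 1) • e)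
  have hT : ∀ x, T x = x + ⟪e, x⟫ • ((δ - 1) • e) := fun x => rfl
  have hdet : LinearMap.det T = δ := by
    have := LinearMap.transvection.det ((innerSL ℝ e : E →L[ℝ] ℝ) : E →ₗ[ℝ] ℝ) ((δ - 1) • e)
    rw [this]
    simp [inner_smul_right, hee, he]
  have hTv : T v = v := by rw [hT, hev]; simp
  refine ⟨T '' Metric.closedBall v (1/2), ?_, ?_, ?_⟩
  · exact (isCompact_closedBall _ _).image T.continuous_of_finiteDimensional
  · rw [measureReal_def, Measure.addHaar_image_linearMap, hdet, abs_of_pos h0, ENNReal.toReal_mul,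
      ENNReal.toReal_ofReal h0.le, measureReal_def, Measure.addHaar_closedBall_center]
  · rintro _ ⟨x, hx, rfl⟩
    have hx' : ‖x - v‖ ≤ 1/2 := by simpa [dist_eq_norm] using hx
    have hxe : ⟪e, x⟫ = ⟪e, x - v⟫ := by rw [inner_sub_right, hev, sub_zero]
    have hxle : |⟪e, x⟫| ≤ 1/2 := by
      rw [hxe]
      refine (abs_real_inner_le_norm _ _).trans ?_
      rw [he, one_mul]
      exact hx'
    have hTe : ⟪e, T x⟫ = δ * ⟪e, x⟫ := by
      rw [hT, inner_add_right, inner_smul_right, inner_smul_right, hee]; ring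
    have hcontr : ‖T x - v‖ ≤ ‖x - v‖ := by
      have h2 : T x - v = (x - v) + (⟪e, x - v⟫ * (δ - 1)) • e := by
        rw [hT, smul_smul, hxe]; abel
      have h3 : ‖T x - v‖ ^ 2 ≤ ‖x - v‖ ^ 2 := by
        rw [h2, norm_add_sq_real, norm_smul, he, inner_smul_right, real_inner_comm e (x - v),
          Real.norm_eq_abs, mul_one, sq_abs]
        have : 0 ≤ ⟪e, x - v⟫ ^ 2 * ((1 - δ) * (1 + δ)) :=
          mul_nonneg (sq_nonneg _) (mul_nonneg (by linarith) (by linarith))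
        first
          | nlinarith
          | (rw [real_inner_comm] at this; nlinarith)
      exact le_of_sq_le_sq h3 (norm_nonneg _)
    have ha : ‖v‖ ≤ ‖T x‖ + ‖T x - v‖ := by
      have := norm_sub_le (T x) (T x - v)
      simpa using this
    have hb : ‖T x‖ ≤ ‖T x - v‖ + ‖v‖ := by
      have := norm_add_le (T x - v) v
      simpa using this
    refine ⟨by linarith, by linarith, ?_⟩
    rw [hTe, abs_mul, abs_of_pos h0]
    nlinarith

set_option maxHeartbeats 1000000 in
/-- The key joint `(ξ, η)` lower bound for the boundary principal symbol of the
conjugated normal operator: with `⟨ξ⟩² = ξ² + F²`, the quantity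
`⟨ξ⟩⁻¹ ∫_{S^{n-2}} exp(-(η·ω)²/(4cα(ω)⟨ξ⟩²)) dσ(ω)` is bounded below by
`c'/√(1 + ξ² + |η|²)`. -/
theorem stmt14 (n : ℕ) (hn : 3 ≤ n) (F c c₁ c₂ : ℝ) (hF : 0 < F) (hc : 0 < c)
    (σ : Measure ↥(Metric.sphere (0 : EuclideanSpace ℝ (Fin (n - 1))) 1))
    (hσ : ∀ f : EuclideanSpace ℝ (Fin (n - 1)) → ℝ, Integrable f →
      ∫ Y, f Y = ∫ r in Set.Ioi (0 : ℝ),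
        (∫ ω : ↥(Metric.sphere (0 : EuclideanSpace ℝ (Fin (n - 1))) 1),
          f (r • (ω : EuclideanSpace ℝ (Fin (n - 1)))) ∂σ) * r ^ (n - 2))
    (α : EuclideanSpace ℝ (Fin (n - 1)) → ℝ)
    (hαcont : ContinuousOn α (Metric.sphere (0 : EuclideanSpace ℝ (Fin (n - 1))) 1))
    (hc₁ : 0 < c₁)
    (hα : ∀ ω ∈ Metric.sphere (0 : EuclideanSpace ℝ (Fin (n - 1))) 1, c₁ ≤ α ω ∧ α ω ≤ c₂) :
    ∃ c' : ℝ, 0 < c' ∧ ∀ (ξ : ℝ) (η : EuclideanSpace ℝ (Fin (n - 1))),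
      c' / Real.sqrt (1 + ξ ^ 2 + ‖η‖ ^ 2) ≤
        (1 / Real.sqrt (ξ ^ 2 + F ^ 2)) *
          ∫ ω : ↥(Metric.sphere (0 : EuclideanSpace ℝ (Fin (n - 1))) 1),
            Real.exp (-((⟪η, (ω : EuclideanSpace ℝ (Fin (n - 1)))⟫ : ℝ) ^ 2 /
              (4 * c * α (ω : EuclideanSpace ℝ (Fin (n - 1))) * (ξ ^ 2 + F ^ 2)))) ∂σ := by
  have hfr : Module.finrank ℝ (EuclideanSpace ℝ (Fin (n - 1))) = n - 1 := by simp
  haveI : Nontrivial (EuclideanSpace ℝ (Fin (n - 1))) :=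
    Module.nontrivial_of_finrank_pos (R := ℝ) (by omega)
  -- finiteness of `σ`
  haveI hfin : IsFiniteMeasure σ := by
    by_contra hnot
    have hinf : σ univ = ⊤ := by
      by_contra h
      exact hnot ⟨lt_top_iff_ne_top.mpr h⟩
    have h := hσ ((Metric.ball 0 1).indicator fun _ => (1 : ℝ))
      ((integrable_indicator_iff Metric.isOpen_ball.measurableSet).mpr
        (integrableOn_const measure_ball_lt_top.ne))
    have hz : ∀ r ∈ Ioi (0 : ℝ),
        (∫ ω : ↥(Metric.sphere (0 : EuclideanSpace ℝ (Fin (n - 1))) 1),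
          (Metric.ball (0 : EuclideanSpace ℝ (Fin (n - 1))) 1).indicator (fun _ => (1 : ℝ))
            (r • (ω : EuclideanSpace ℝ (Fin (n - 1)))) ∂σ) * r ^ (n - 2) = 0 := by
      intro r hr
      have hr' : (0 : ℝ) < r := hr
      have : ∀ ω : ↥(Metric.sphere (0 : EuclideanSpace ℝ (Fin (n - 1))) 1),
          (Metric.ball (0 : EuclideanSpace ℝ (Fin (n - 1))) 1).indicator (fun _ => (1 : ℝ))
            (r • (ω : EuclideanSpace ℝ (Fin (n - 1)))) = if r < 1 then 1 else 0 := by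
        intro ω
        have hω : ‖(ω : EuclideanSpace ℝ (Fin (n - 1)))‖ = 1 := by simp
        simp [indicator, norm_smul, abs_of_pos hr']
      simp_rw [this]
      rw [integral_const, measureReal_def, hinf]
      simp
    rw [setIntegral_congr_fun measurableSet_Ioi hz, integral_indicator Metric.isOpen_ball.measurableSet]
      at h
    have hpos : 0 < volume.real (Metric.ball (0 : EuclideanSpace ℝ (Fin (n - 1))) 1) :=
      ENNReal.toReal_pos (Metric.measure_ball_pos _ _ one_pos).ne' measure_ball_lt_top.ne
    simp at h
    linarith
  set V := volume.real (Metric.closedBall (0 : EuclideanSpace ℝ (Fin (n - 1))) (1/2)) with hVdef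
  have hV : 0 < V :=
    ENNReal.toReal_pos (Metric.measure_closedBall_pos _ _ (by norm_num)).ne'
      measure_closedBall_lt_top.ne
  set q := Real.sqrt (4 * c * c₁) with hq
  have hq0 : 0 < q := Real.sqrt_pos.mpr (by positivity)
  have hq2 : q ^ 2 = 4 * c * c₁ := Real.sq_sqrt (by positivity)
  set M := q * (1 + F) + 1 with hM
  have hM0 : 0 < M := by positivity
  set B := Real.exp 1 * 2 ^ (n - 2) with hB
  have hB0 : 0 < B := by positivity
  refine ⟨q * V / (M * B), by positivity, ?_⟩
  intro ξ η
  set s := Real.sqrt (ξ ^ 2 + F ^ 2) with hs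
  have hs0 : 0 < s := Real.sqrt_pos.mpr (by positivity)
  have hs2 : s ^ 2 = ξ ^ 2 + F ^ 2 := Real.sq_sqrt (by positivity)
  set R := Real.sqrt (1 + ξ ^ 2 + ‖η‖ ^ 2) with hR
  have hR0 : 0 < R := Real.sqrt_pos.mpr (by positivity)
  have hR2 : R ^ 2 = 1 + ξ ^ 2 + ‖η‖ ^ 2 := Real.sq_sqrt (by positivity)
  set I := ∫ ω : ↥(Metric.sphere (0 : EuclideanSpace ℝ (Fin (n - 1))) 1),
            Real.exp (-((⟪η, (ω : EuclideanSpace ℝ (Fin (n - 1)))⟫ : ℝ) ^ 2 /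
              (4 * c * α (ω : EuclideanSpace ℝ (Fin (n - 1))) * (ξ ^ 2 + F ^ 2)))) ∂σ with hI
  have hI0 : 0 ≤ I := integral_nonneg fun ω => (Real.exp_pos _).le
  have hD0 : 0 < q * s + ‖η‖ := by positivity
  set δ := q * s / (q * s + ‖η‖) with hδ
  have hδ0 : 0 < δ := by positivity
  have hδ1 : δ ≤ 1 := by
    rw [hδ, div_le_one hD0]
    linarith [norm_nonneg η]
  have hηδ : ‖η‖ * δ ≤ q * s := by
    rw [hδ, mul_div_assoc', div_le_iff₀ hD0]
    have : 0 < q * s := by positivity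
    nlinarith [norm_nonneg η]
  have hdim : 2 ≤ Module.finrank ℝ (EuclideanSpace ℝ (Fin (n - 1))) := by omega
  obtain ⟨e, he, hηe⟩ : ∃ e : EuclideanSpace ℝ (Fin (n - 1)), ‖e‖ = 1 ∧ η = ‖η‖ • e := by
    by_cases h : η = 0
    · obtain ⟨e, he⟩ := exists_norm_eq (EuclideanSpace ℝ (Fin (n - 1))) (c := 1) (by norm_num)
      exact ⟨e, he, by simp [h]⟩
    · have h' : ‖η‖ ≠ 0 := norm_ne_zero_iff.mpr h
      exact ⟨‖η‖⁻¹ • η, by simp [norm_smul, h'], by simp [smul_smul, h']⟩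
  obtain ⟨S, hSc, hSvol, hS⟩ := slab_exists hdim e he δ hδ0 hδ1
  have hpol := hσ (S.indicator fun _ => (1 : ℝ))
      ((integrable_indicator_iff hSc.measurableSet).mpr
        (integrableOn_const hSc.measure_lt_top.ne))
  have hlhs : ∫ Y, S.indicator (fun _ => (1 : ℝ)) Y = δ * V := by
    rw [integral_indicator hSc.measurableSet]
    simp only [integral_const, smul_eq_mul, mul_one, measureReal_restrict_apply_univ]
    exact hSvol
  rw [hlhs] at hpol
  -- integrability of the Gaussian
  have hαpos : ∀ ω : ↥(Metric.sphere (0 : EuclideanSpace ℝ (Fin (n - 1))) 1),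
      0 < α (ω : EuclideanSpace ℝ (Fin (n - 1))) := fun ω => hc₁.trans_le (hα ω ω.2).1
  have hss : 0 < ξ ^ 2 + F ^ 2 := by positivity
  have hGint : Integrable (fun ω : ↥(Metric.sphere (0 : EuclideanSpace ℝ (Fin (n - 1))) 1) =>
      Real.exp (-((⟪η, (ω : EuclideanSpace ℝ (Fin (n - 1)))⟫ : ℝ) ^ 2 /
              (4 * c * α (ω : EuclideanSpace ℝ (Fin (n - 1))) * (ξ ^ 2 + F ^ 2))))) σ := by
    have hαc : Continuous fun ω : ↥(Metric.sphere (0 : EuclideanSpace ℝ (Fin (n - 1))) 1) =>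
        α (ω : EuclideanSpace ℝ (Fin (n - 1))) := continuousOn_iff_continuous_domRestrict.mp hαcont
    have hcont : Continuous (fun ω : ↥(Metric.sphere (0 : EuclideanSpace ℝ (Fin (n - 1))) 1) =>
      Real.exp (-((⟪η, (ω : EuclideanSpace ℝ (Fin (n - 1)))⟫ : ℝ) ^ 2 /
              (4 * c * α (ω : EuclideanSpace ℝ (Fin (n - 1))) * (ξ ^ 2 + F ^ 2))))) := by
      refine Real.continuous_exp.comp (Continuous.neg (Continuous.div ?_ ?_ ?_))
      · fun_prop
      · exact (continuous_const.mul hαc).mul continuous_const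
      · intro ω
        have := hαpos ω
        positivity
    refine Integrable.of_bound hcont.aestronglyMeasurable 1 (Filter.Eventually.of_forall ?_)
    intro ω
    have := hαpos ω
    rw [Real.norm_eq_abs, abs_of_pos (Real.exp_pos _), Real.exp_le_one_iff, neg_nonpos]
    positivity
  -- pointwise comparison
  have hpt : ∀ r : ℝ, 0 < r → ∀ ω : ↥(Metric.sphere (0 : EuclideanSpace ℝ (Fin (n - 1))) 1),
      r • (ω : EuclideanSpace ℝ (Fin (n - 1))) ∈ S → (1 ≤ r ∧ r ≤ 2) ∧
      1 ≤ Real.exp 1 * Real.exp (-((⟪η, (ω : EuclideanSpace ℝ (Fin (n - 1)))⟫ : ℝ) ^ 2 /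
              (4 * c * α (ω : EuclideanSpace ℝ (Fin (n - 1))) * (ξ ^ 2 + F ^ 2)))) := by
    intro r hr ω hmem
    have hω : ‖(ω : EuclideanSpace ℝ (Fin (n - 1)))‖ = 1 := by simp
    obtain ⟨h1, h2, h3⟩ := hS _ hmem
    rw [norm_smul, hω, mul_one, Real.norm_eq_abs, abs_of_pos hr] at h1 h2
    refine ⟨⟨h1, h2⟩, ?_⟩
    rw [inner_smul_right, abs_mul, abs_of_pos hr] at h3
    have h4 : |⟪e, (ω : EuclideanSpace ℝ (Fin (n - 1)))⟫| ≤ δ := by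
      nlinarith [abs_nonneg ⟪e, (ω : EuclideanSpace ℝ (Fin (n - 1)))⟫]
    have h5 : |⟪η, (ω : EuclideanSpace ℝ (Fin (n - 1)))⟫| ≤ q * s := by
      have h6 : ⟪η, (ω : EuclideanSpace ℝ (Fin (n - 1)))⟫
          = ‖η‖ * ⟪e, (ω : EuclideanSpace ℝ (Fin (n - 1)))⟫ := by
        conv_lhs => rw [hηe]
        rw [real_inner_smul_left]
      rw [h6, abs_mul, abs_of_nonneg (norm_nonneg η)]
      exact (mul_le_mul_of_nonneg_left h4 (norm_nonneg η)).trans hηδ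
    have h7 : ⟪η, (ω : EuclideanSpace ℝ (Fin (n - 1)))⟫ ^ 2 ≤
        4 * c * α (ω : EuclideanSpace ℝ (Fin (n - 1))) * (ξ ^ 2 + F ^ 2) := by
      rw [← sq_abs]
      calc |⟪η, (ω : EuclideanSpace ℝ (Fin (n - 1)))⟫| ^ 2 ≤ (q * s) ^ 2 := by gcongr
        _ = 4 * c * c₁ * (ξ ^ 2 + F ^ 2) := by rw [mul_pow, hq2, hs2]
        _ ≤ _ := by
          have := (hα ω ω.2).1
          gcongr
    rw [← Real.exp_add, Real.one_le_exp_iff]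
    have hden : 0 < 4 * c * α (ω : EuclideanSpace ℝ (Fin (n - 1))) * (ξ ^ 2 + F ^ 2) := by
      have := hαpos ω
      positivity
    have := (div_le_one hden).mpr h7
    linarith
  have hmain : δ * V ≤ B * I := by
    rw [hpol]
    calc _ ≤ ∫ r in Ioi (0 : ℝ), (Icc (1 : ℝ) 2).indicator (fun _ => B * I) r := by
          refine integral_mono_of_nonneg ?_ ?_ ?_
          · filter_upwards [ae_restrict_mem measurableSet_Ioi] with r hr
            have hr' : (0 : ℝ) < r := hr
            refine mul_nonneg (integral_nonneg fun ω => ?_) (by positivity)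
            exact indicator_nonneg (fun _ _ => zero_le_one) _
          · refine Integrable.mono_measure ?_ Measure.restrict_le_self
            exact (integrable_indicator_iff measurableSet_Icc).mpr
              (integrableOn_const measure_Icc_lt_top.ne)
          · filter_upwards [ae_restrict_mem measurableSet_Ioi] with r hr
            have hr' : (0 : ℝ) < r := hr
            by_cases h12 : r ∈ Icc (1 : ℝ) 2
            · rw [indicator_of_mem h12]
              have hle : ∫ ω : ↥(Metric.sphere (0 : EuclideanSpace ℝ (Fin (n - 1))) 1),
                  S.indicator (fun _ => (1 : ℝ)) (r • (ω : EuclideanSpace ℝ (Fin (n - 1)))) ∂σ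
                  ≤ Real.exp 1 * I := by
                rw [hI, ← integral_const_mul]
                refine integral_mono_of_nonneg ?_ (hGint.const_mul _) ?_
                · exact Filter.Eventually.of_forall fun ω =>
                    indicator_nonneg (fun _ _ => zero_le_one) _
                · refine Filter.Eventually.of_forall fun ω => ?_
                  by_cases hm : r • (ω : EuclideanSpace ℝ (Fin (n - 1))) ∈ S
                  · simp only [indicator_of_mem hm]
                    exact (hpt r hr' ω hm).2
                  · simp only [indicator_of_notMem hm]
                    positivity
              calc _ ≤ (Real.exp 1 * I) * 2 ^ (n - 2) := by
                    refine mul_le_mul hle (pow_le_pow_left₀ hr'.le h12.2 _) (by positivity)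
                      (by positivity)
                _ = B * I := by rw [hB]; ring
            · rw [indicator_of_notMem h12]
              have : ∀ ω : ↥(Metric.sphere (0 : EuclideanSpace ℝ (Fin (n - 1))) 1),
                  S.indicator (fun _ => (1 : ℝ)) (r • (ω : EuclideanSpace ℝ (Fin (n - 1)))) = 0 :=
                fun ω => indicator_of_notMem (fun hm => h12 (hpt r hr' ω hm).1) _
              simp [this]
      _ = B * I := by
          rw [setIntegral_indicator measurableSet_Icc,
            inter_eq_self_of_subset_right (show Icc (1 : ℝ) 2 ⊆ Ioi 0 from fun x hx => lt_of_lt_of_le one_pos hx.1)]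
          simp only [integral_const, measureReal_restrict_apply_univ, Real.volume_real_Icc, smul_eq_mul]
          norm_num
  have hsR : s ≤ (1 + F) * R := by
    refine le_of_sq_le_sq ?_ (by positivity)
    rw [mul_pow, hs2, hR2]
    nlinarith [sq_nonneg ξ, sq_nonneg ‖η‖, mul_nonneg hF.le (sq_nonneg ξ),
      mul_nonneg (sq_nonneg (1 + F)) (sq_nonneg ‖η‖), sq_nonneg (F * ξ)]
  have hηR : ‖η‖ ≤ R := by
    refine le_of_sq_le_sq ?_ hR0.le
    rw [hR2]
    nlinarith [sq_nonneg ξ]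
  have hDR : q * s + ‖η‖ ≤ M * R := by
    have := mul_le_mul_of_nonneg_left hsR hq0.le
    have h9 : M * R = q * ((1 + F) * R) + R := by rw [hM]; ring
    linarith
  calc q * V / (M * B) / R = q * V / (B * (M * R)) := by rw [div_div]; congr 1; ring
    _ ≤ q * V / (B * (q * s + ‖η‖)) := by gcongr
    _ = (1 / s) * (δ * V / B) := by rw [hδ]; field_simp
    _ ≤ (1 / s) * I := by
        gcongr
        rw [div_le_iff₀ hB0]
        linarith
end
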